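/- Let Δ be a Fano simplex of dimension d ≥ 2 and Gorenstein index g ≥ 1 with (d,g) ≠ (2,1). Then Vol(Δ) ≤ 2·t_{g,d}²/g². Equality holds if and only if Δ ≅ Δ(P), where P is either the 3×4 matrix with columns (1,0,0), (1,2,0), (1,2,6), (−5,−4,−6), or the d×(d+1) matrix whose first d−1 columns are the standard basis vectors e₁,…,e_{d−1}, whose d-th column v has entries v_k = ((s_{g,k}−g)/s_{g,k})·(t_{g,d}/g) for k = 1,…,d−1 and v_d = t_{g,d}/g, and whose last column w has entries w_k = −((s_{g,k}+g)/s_{g,k})·(t_{g,d}/g) for k = 1,…,d−1 and w_d = −t_{g,d}/g. -/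

import Mathlib

open Finset Pointwise

/-- Cast an integer vector to a rational vector. -/
def toQ {d : ℕ} (v : Fin d → ℤ) : Fin d → ℚ := fun j => (v j : ℚ)

/-- An integer vector is primitive if the gcd of its entries is 1. -/
def IsPrimitive {d : ℕ} (v : Fin d → ℤ) : Prop := Finset.univ.gcd v = 1

/-- The origin lies in the interior of the simplex with the given vertices,
i.e. the origin is a convex combination of the vertices with positive coefficients. -/
def OriginInInterior {d : ℕ} (v : Fin (d + 1) → Fin d → ℚ) : Prop :=
  ∃ w : Fin (d + 1) → ℚ, (∀ i, 0 < w i) ∧ ∑ i, w i = 1 ∧ ∀ j, ∑ i, w i * v i j = 0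

/-- A Fano simplex, given by its tuple of vertices: the vertices are primitive integer
vectors, affinely independent, and the origin lies in the interior. -/
def IsFanoSimplex {d : ℕ} (v : Fin (d + 1) → Fin d → ℤ) : Prop :=
  AffineIndependent ℚ (fun i => toQ (v i)) ∧ (∀ i, IsPrimitive (v i)) ∧
    OriginInInterior fun i => toQ (v i)

/-- The simplex spanned by the given vertices. -/
def simplexHull {d : ℕ} (v : Fin (d + 1) → Fin d → ℚ) : Set (Fin d → ℚ) :=
  convexHull ℚ (Set.range v)

/-- The dual body `Δ* = {u : ⟨u,v⟩ ≥ -1 for all v ∈ Δ}`. -/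
def dualBody {d : ℕ} (S : Set (Fin d → ℚ)) : Set (Fin d → ℚ) :=
  {u | ∀ x ∈ S, -1 ≤ ∑ j, u j * x j}

/-- A set is a lattice polytope iff it is the convex hull of its integral points
(equivalently, all its vertices are lattice points). -/
def IsLatticeSet {d : ℕ} (S : Set (Fin d → ℚ)) : Prop :=
  S = convexHull ℚ {x ∈ S | ∀ j, ∃ z : ℤ, x j = (z : ℚ)}

/-- The Gorenstein index: the least positive integer `g` such that `g • Δ*` is a
lattice polytope. -/
noncomputable def gorensteinIndex {d : ℕ} (v : Fin (d + 1) → Fin d → ℚ) : ℕ :=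
  sInf {g : ℕ | 0 < g ∧ IsLatticeSet ((g : ℚ) • dualBody (simplexHull v))}

/-- The normalized volume `d! · vol(Δ)` of the simplex with the given vertices. -/
def normVol {d : ℕ} (v : Fin (d + 1) → Fin d → ℚ) : ℚ :=
  |(Matrix.of fun i j : Fin d => v i.succ j - v 0 j).det|

/-- Two (Fano) simplices, given by their vertex tuples, are isomorphic iff some
unimodular integer matrix maps the vertex set of one onto the vertex set of the other. -/
def IsIsomorphicTo {d : ℕ} (v w : Fin (d + 1) → Fin d → ℤ) : Prop :=
  ∃ (U : Matrix (Fin d) (Fin d) ℤ) (σ : Equiv.Perm (Fin (d + 1))),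
    IsUnit U.det ∧ ∀ i, U.mulVec (v i) = w (σ i)


/-- Isomorphism onto a simplex given by a rational vertex matrix: a unimodular
integer matrix maps the vertex set of `v` onto the columns of `w`. -/
def IsIsomorphicToQ {d : ℕ} (v : Fin (d + 1) → Fin d → ℤ)
    (w : Fin (d + 1) → Fin d → ℚ) : Prop :=
  ∃ (U : Matrix (Fin d) (Fin d) ℤ) (σ : Equiv.Perm (Fin (d + 1))),
    IsUnit U.det ∧ ∀ i, (U.map (Int.cast : ℤ → ℚ)).mulVec (toQ (v i)) = w (σ i)

/-- The `g`-Sylvester sequence: `s_{g,1} = g+1`, `s_{g,k+1} = s_{g,k}(s_{g,k}-1)+1`.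
(The value at `0` is junk and never used.) -/
def sylv (g : ℕ) : ℕ → ℕ
  | 0 => 0
  | 1 => g + 1
  | k + 2 => sylv g (k + 1) * (sylv g (k + 1) - 1) + 1

/-- The truncated `g`-Sylvester sequence `t_{g,k} = s_{g,k} - 1`. -/
def tsylv (g k : ℕ) : ℕ := sylv g k - 1

/-- The exceptional 3×4 vertex matrix with columns (1,0,0), (1,2,0), (1,2,6), (-5,-4,-6),
written for general `d` (it is used only when `d = 3`). -/
def Pexc (d : ℕ) : Fin (d + 1) → Fin d → ℚ := fun i j =>
  if i.val = 0 then (if j.val = 0 then 1 else 0)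
  else if i.val = 1 then (if j.val = 0 then 1 else if j.val = 1 then 2 else 0)
  else if i.val = 2 then
    (if j.val = 0 then 1 else if j.val = 1 then 2 else if j.val = 2 then 6 else 0)
  else (if j.val = 0 then -5 else if j.val = 1 then -4 else -6)

/-- The general extremal `d×(d+1)` vertex matrix: the first `d-1` columns are the
standard basis vectors `e_1,…,e_{d-1}`, the `d`-th column has entries
`((s_{g,k}-g)/s_{g,k})·(t_{g,d}/g)` for `k = 1,…,d-1` and last entry `t_{g,d}/g`, and
the last column has entries `-((s_{g,k}+g)/s_{g,k})·(t_{g,d}/g)` for `k = 1,…,d-1`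
and last entry `-t_{g,d}/g`. -/
def Pgen (g d : ℕ) : Fin (d + 1) → Fin d → ℚ := fun i j =>
  if i.val < d - 1 then (if j.val = i.val then 1 else 0)
  else if i.val = d - 1 then
    (if j.val < d - 1 then
      ((sylv g (j.val + 1) : ℚ) - (g : ℚ)) / (sylv g (j.val + 1) : ℚ) *
        ((tsylv g d : ℚ) / (g : ℚ))
    else (tsylv g d : ℚ) / (g : ℚ))
  else
    (if j.val < d - 1 then
      -(((sylv g (j.val + 1) : ℚ) + (g : ℚ)) / (sylv g (j.val + 1) : ℚ) *
        ((tsylv g d : ℚ) / (g : ℚ)))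
    else -((tsylv g d : ℚ) / (g : ℚ)))

/-!
Let `A i / g` be the reciprocals of the barycentric coordinates of the origin with respect to the
simplex, in increasing order. The vertices `u i` of `g • Δ*` are lattice points, which makes the
`A i` positive integers with `∑ 1 / A i = 1 / g`. Cramer's rule gives
`|det (u i)_{i < d}| * Vol Δ = ∏_{i < d} A i`, and `g` divides the determinant because the last
vertex of `Δ` is primitive and pairs to `-g` with each `u i`, `i < d`. Hence
`g * Vol Δ ≤ ∏_{i < d} A i`.

The product is bounded by adding the last two of the unit fractions `1 / A i`. Each product of
some, but not all, of the resulting `d` numbers is at most `g` times the sum of the others. For the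
numbers `1 / s_{g,1}, …, 1 / s_{g,d-1}, 1 / t_{g,d}` the corresponding inequalities are equalities,
and a logarithmic majorization argument shows that they alone have the smallest product.

In the equality case the `A i` are known and `|det (u i)_{i < d}| = g`. For the Sylvester solution,
the pairings with the first `d - 1` vertices show that `u (d - 1)` is divisible by `g`; dividing it
by `g` turns the `u i`, `i < d`, into a unimodular coordinate system, in which the vertices of `Δ`
are known. The other solutions are `A = (2, 6, 6, 6)`, `g = 1`, the exceptional simplex, and
`A = (6, 6, 6)`, `g = 2`, where `v 0 + v 1 + v 2 = 0`, so that `det (v 0, v 1)` has to be odd,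
although it equals `± 6`.
-/

section Comparison

lemma sum_range_mul_nonneg_of_antitone {R : Type*} [Ring R] [PartialOrder R] [IsOrderedRing R]
    {a c : ℕ → R} {m : ℕ} (ha₀ : ∀ i, 0 ≤ a i) (ha : Antitone a)
    (hc : ∀ l ≤ m, 0 ≤ ∑ i ∈ range l, c i) :
    0 ≤ ∑ i ∈ range m, a i * c i := by
  have abel : ∀ l ≤ m, a l * ∑ i ∈ range l, c i ≤ ∑ i ∈ range l, a i * c i := by
    intro l
    induction l with
    | zero => simp
    | succ l ih =>
      intro hl
      calc a (l + 1) * ∑ i ∈ range (l + 1), c i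
          ≤ a l * ∑ i ∈ range (l + 1), c i :=
            mul_le_mul_of_nonneg_right (ha l.le_succ) (hc _ hl)
        _ = a l * ∑ i ∈ range l, c i + a l * c l := by rw [sum_range_succ, mul_add]
        _ ≤ ∑ i ∈ range (l + 1), a i * c i := by
            rw [sum_range_succ]
            gcongr
            exact ih (by lia)
  exact (mul_nonneg (ha₀ m) (hc m le_rfl)).trans (abel m le_rfl)

-- Abel summation makes `∑ aᵢ log (bᵢ / aᵢ)` nonnegative, and `log r ≤ r - 1` bounds it above by
-- `∑ bᵢ - ∑ aᵢ ≤ 0`.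
lemma eq_of_prod_range_le_of_sum_range_le {a b : ℕ → ℝ} {m : ℕ} (ha : ∀ i, 0 < a i)
    (hb : ∀ i, 0 < b i) (hanti : Antitone a)
    (hprod : ∀ l ≤ m, ∏ i ∈ range l, a i ≤ ∏ i ∈ range l, b i)
    (hsum : ∑ i ∈ range m, b i ≤ ∑ i ∈ range m, a i) : ∀ i < m, a i = b i := by
  have ratio_pos (i) : 0 < b i / a i := div_pos (hb i) (ha i)
  have weighted_log_nonneg : 0 ≤ ∑ i ∈ range m, a i * Real.log (b i / a i) := by
    refine sum_range_mul_nonneg_of_antitone (fun i ↦ (ha i).le) hanti fun l hl ↦ ?_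
    rw [← Real.log_prod fun i _ ↦ (ratio_pos i).ne', prod_div_distrib]
    exact Real.log_nonneg ((one_le_div (prod_pos fun i _ ↦ ha i)).2 (hprod l hl))
  have mul_ratio_sub (i) : a i * (b i / a i - 1) = b i - a i := by
    have := (ha i).ne'
    field_simp
  have log_le (i) : a i * Real.log (b i / a i) ≤ b i - a i :=
    mul_ratio_sub i ▸ mul_le_mul_of_nonneg_left (Real.log_le_sub_one_of_pos (ratio_pos i)) (ha i).le
  have sum_eq : ∑ i ∈ range m, a i * Real.log (b i / a i) = ∑ i ∈ range m, (b i - a i) := by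
    refine le_antisymm (sum_le_sum fun i _ ↦ log_le i) ?_
    rw [sum_sub_distrib]
    linarith
  intro i hi
  by_contra hne
  have ratio_ne : b i / a i ≠ 1 := fun h ↦ hne ((div_eq_one_iff_eq (ha i).ne').1 h).symm
  have log_lt := mul_lt_mul_of_pos_left (Real.log_lt_sub_one_of_pos (ratio_pos i) ratio_ne) (ha i)
  rw [mul_ratio_sub] at log_lt
  exact log_lt.ne ((sum_eq_sum_iff_of_le fun i _ ↦ log_le i).1 sum_eq i (mem_range.2 hi))

variable {n : ℕ} {g : ℝ} {x y : ℕ → ℝ}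

-- Take `k` maximal with `∏_{i<k} y ≤ ∏_{i<k} x`: on `[k, j)` all partial products of `x` are at
-- most those of `y`, while the tail condition at `k` compares the sums the other way.
lemma exists_lt_eqOn_Ico (hg : 0 < g) (hx : ∀ i, 0 < x i) (hy : ∀ i, 0 < y i) (hanti : Antitone x)
    (htail_x : ∀ k < n, ∏ i ∈ range k, x i ≤ g * ∑ i ∈ Ico k n, x i)
    (htail_y : ∀ k < n, ∏ i ∈ range k, y i = g * ∑ i ∈ Ico k n, y i)
    {j : ℕ} (hj₀ : 0 < j) (hjn : j ≤ n) (hprod : ∏ i ∈ range j, x i ≤ ∏ i ∈ range j, y i)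
    (heq : ∀ i ∈ Ico j n, x i = y i) :
    ∃ k < j, ∏ i ∈ range k, x i ≤ ∏ i ∈ range k, y i ∧ ∀ i ∈ Ico k n, x i = y i := by
  classical
  let P (k : ℕ) : Prop := ∏ i ∈ range k, y i ≤ ∏ i ∈ range k, x i
  let k := Nat.findGreatest P (j - 1)
  have hkj : k < j := by have := Nat.findGreatest_le (P := P) (j - 1); lia
  have hPk : P k := Nat.findGreatest_spec (m := 0) (by simp) (by simp [P])
  have prod_le_of_lt (l) (hkl : k < l) (hlj : l ≤ j) :
      ∏ i ∈ range l, x i ≤ ∏ i ∈ range l, y i := by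
    rcases hlj.eq_or_lt with rfl | hlj
    · exact hprod
    · exact (not_le.1 (Nat.findGreatest_is_greatest (P := P) hkl (Nat.le_sub_one_of_lt hlj))).le
  have sum_tail : ∑ i ∈ Ico k n, y i ≤ ∑ i ∈ Ico k n, x i :=
    le_of_mul_le_mul_left (htail_y k (by lia) ▸ hPk.trans (htail_x k (by lia))) hg
  have sum_segment : ∑ i ∈ Ico k j, y i ≤ ∑ i ∈ Ico k j, x i := by
    rw [← sum_Ico_consecutive _ hkj.le hjn, ← sum_Ico_consecutive _ hkj.le hjn,
      sum_congr rfl heq] at sum_tail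
    exact le_of_add_le_add_right sum_tail
  have eq_segment : ∀ i < j - k, x (k + i) = y (k + i) := by
    refine eq_of_prod_range_le_of_sum_range_le (fun i ↦ hx _) (fun i ↦ hy _)
      (fun a b hab ↦ hanti (by lia)) (fun l hl ↦ ?_)
      (by simpa only [sum_Ico_eq_sum_range] using sum_segment)
    rcases l.eq_zero_or_pos with rfl | hl₀
    · simp
    have h := prod_le_of_lt (k + l) (by lia) (by lia)
    rw [prod_range_add, prod_range_add] at h
    refine le_of_mul_le_mul_left ?_ (prod_pos fun i _ ↦ hy i : 0 < ∏ i ∈ range k, y i)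
    exact (mul_le_mul_of_nonneg_right hPk (prod_nonneg fun i _ ↦ (hx _).le)).trans h
  have eq_on : ∀ i ∈ Ico k n, x i = y i := by
    intro i hi
    rw [mem_Ico] at hi
    rcases lt_or_ge i j with hij | hij
    · simpa [hi.1] using eq_segment (i - k) (by lia)
    · exact heq i (mem_Ico.2 ⟨hij, hi.2⟩)
  refine ⟨k, hkj, ?_, eq_on⟩
  rw [← prod_range_mul_prod_Ico _ hkj.le, ← prod_range_mul_prod_Ico _ hkj.le,
    prod_congr rfl fun i hi ↦ eq_on i (Ico_subset_Ico_right hjn hi)] at hprod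
  exact le_of_mul_le_mul_right hprod (prod_pos fun i _ ↦ hy i)

lemma eq_of_prod_range_le_mul_sum_Ico (hg : 0 < g) (hx : ∀ i, 0 < x i) (hy : ∀ i, 0 < y i)
    (hanti : Antitone x)
    (htail_x : ∀ k < n, ∏ i ∈ range k, x i ≤ g * ∑ i ∈ Ico k n, x i)
    (htail_y : ∀ k < n, ∏ i ∈ range k, y i = g * ∑ i ∈ Ico k n, y i)
    (hprod : ∏ i ∈ range n, x i ≤ ∏ i ∈ range n, y i) : ∀ i < n, x i = y i := by
  have descent : ∀ j ≤ n, ∏ i ∈ range j, x i ≤ ∏ i ∈ range j, y i →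
      (∀ i ∈ Ico j n, x i = y i) → ∀ i < n, x i = y i := by
    intro j
    induction j using Nat.strong_induction_on with
    | _ j ih =>
      intro hjn hj heq
      rcases j.eq_zero_or_pos with rfl | hj₀
      · simpa using heq
      obtain ⟨k, hkj, hk, heq⟩ :=
        exists_lt_eqOn_Ico hg hx hy hanti htail_x htail_y hj₀ hjn hj heq
      exact ih k hkj (by lia) hk heq
  exact descent n le_rfl hprod (by simp)

lemma exists_perm_eq_of_prod_le_mul_sum_compl {N : ℕ} {x : Fin (N + 1) → ℝ} (hg : 0 < g)
    (hx : ∀ i, 0 < x i) (hy : ∀ i, 0 < y i)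
    (hsubset : ∀ I : Finset (Fin (N + 1)), I ≠ univ → ∏ i ∈ I, x i ≤ g * ∑ i ∈ Iᶜ, x i)
    (htail_y : ∀ k ≤ N, ∏ i ∈ range k, y i = g * ∑ i ∈ Ico k (N + 1), y i)
    (hprod : ∏ i, x i ≤ ∏ i ∈ range (N + 1), y i) :
    ∃ σ : Equiv.Perm (Fin (N + 1)), ∀ i, x (σ i) = y i := by
  let σ : Equiv.Perm (Fin (N + 1)) := Tuple.sort (-x)
  let clamp (i : ℕ) : Fin (N + 1) := ⟨min i N, by lia⟩
  have clamp_val (i : Fin (N + 1)) : clamp i = i := Fin.ext (by simp [clamp]; lia)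
  have hanti : Antitone fun i ↦ x (σ (clamp i)) := fun i j hij ↦ by
    have : clamp i ≤ clamp j := Fin.mk_le_mk.2 (by lia)
    simpa using Tuple.monotone_sort (-x) this
  have clamp_injOn {k : ℕ} (hk : k ≤ N) : Set.InjOn (fun i ↦ σ (clamp i)) (range k) := by
    intro i hi j hj hij
    have := Fin.mk.inj_iff.1 (σ.injective hij)
    simp only [coe_range, Set.mem_Iio] at hi hj
    lia
  have sum_univ : ∑ i ∈ range (N + 1), x (σ (clamp i)) = ∑ i, x i := by
    rw [← Fin.sum_univ_eq_sum_range (fun i ↦ x (σ (clamp i)))]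
    simpa only [clamp_val] using Equiv.sum_comp σ x
  have prod_univ : ∏ i ∈ range (N + 1), x (σ (clamp i)) = ∏ i, x i := by
    rw [← Fin.prod_univ_eq_prod_range (fun i ↦ x (σ (clamp i)))]
    simpa only [clamp_val] using Equiv.prod_comp σ x
  have htail_x : ∀ k < N + 1, ∏ i ∈ range k, x (σ (clamp i)) ≤
      g * ∑ i ∈ Ico k (N + 1), x (σ (clamp i)) := by
    intro k hk
    let I := (range k).image fun i ↦ σ (clamp i)
    have hI : I ≠ univ := fun h ↦ by
      have := (congrArg card h).symm.trans_le card_image_le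
      simp only [card_univ, Fintype.card_fin, card_range] at this
      lia
    rw [sum_Ico_eq_sub _ hk.le, sum_univ, ← sum_image (clamp_injOn (by lia)),
      ← prod_image (f := x) (clamp_injOn (by lia)), ← sum_add_sum_compl I x, add_sub_cancel_left]
    exact hsubset I hI
  refine ⟨σ, fun i ↦ ?_⟩
  simpa only [clamp_val] using eq_of_prod_range_le_mul_sum_Ico hg (fun i ↦ hx _) hy hanti htail_x
    (fun k hk ↦ htail_y k (by lia)) (prod_univ.trans_le hprod) i i.isLt

end Comparison

section Sylvester

variable {g : ℕ}

lemma sylv_pos (g k : ℕ) : 0 < sylv g (k + 1) := by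
  cases k <;> simp [sylv]

lemma sylv_eq_tsylv_add_one (g k : ℕ) : sylv g (k + 1) = tsylv g (k + 1) + 1 :=
  (Nat.sub_add_cancel (sylv_pos g k)).symm

lemma tsylv_one (g : ℕ) : tsylv g 1 = g := rfl

lemma tsylv_succ (g k : ℕ) : tsylv g (k + 2) = sylv g (k + 1) * tsylv g (k + 1) := rfl

lemma prod_sylv_mul (g N : ℕ) : (∏ i ∈ range N, sylv g (i + 1)) * g = tsylv g (N + 1) := by
  induction N with
  | zero => simp [tsylv_one]
  | succ N ih => rw [prod_range_succ, tsylv_succ, ← ih]; ring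

lemma natCast_zmod_sylv (g k : ℕ) : (sylv g (k + 1) : ZMod g) = 1 := by
  rw [sylv_eq_tsylv_add_one, ← prod_sylv_mul]
  simp

lemma tsylv_pos (hg : 0 < g) (k : ℕ) : 0 < tsylv g (k + 1) := by
  rw [← prod_sylv_mul]
  exact Nat.mul_pos (prod_pos fun i _ ↦ sylv_pos g i) hg

lemma tsylv_monotone (g : ℕ) : Monotone fun k ↦ tsylv g (k + 1) :=
  monotone_nat_of_le_succ fun k ↦ by
    simpa only [tsylv_succ] using Nat.le_mul_of_pos_left _ (sylv_pos g k)

lemma sum_inv_sylv {K : Type*} [Field K] [CharZero K] (hg : 0 < g) (N : ℕ) :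
    ∑ i ∈ range N, (sylv g (i + 1) : K)⁻¹ = (g : K)⁻¹ - (tsylv g (N + 1) : K)⁻¹ := by
  induction N with
  | zero => simp [tsylv_one]
  | succ N ih =>
    have ht : (tsylv g (N + 1) : K) ≠ 0 := mod_cast (tsylv_pos hg N).ne'
    have hs : (tsylv g (N + 1) + 1 : K) ≠ 0 := mod_cast (tsylv g (N + 1)).succ_ne_zero
    rw [sum_range_succ, ih, tsylv_succ, sylv_eq_tsylv_add_one]
    push_cast
    field_simp
    ring

/-- The unit fractions `1 / s_{g,1}, …, 1 / s_{g,N}, 1 / t_{g,N+1}`, with sum `1 / g`, continued by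
the constant value `1 / t_{g,N+1}`. -/
noncomputable def sylvFraction (g N i : ℕ) : ℝ :=
  if i < N then (sylv g (i + 1) : ℝ)⁻¹ else (tsylv g (N + 1) : ℝ)⁻¹

lemma sylvFraction_of_lt {N i : ℕ} (h : i < N) : sylvFraction g N i = (sylv g (i + 1) : ℝ)⁻¹ :=
  if_pos h

lemma sylvFraction_self (g N : ℕ) : sylvFraction g N N = (tsylv g (N + 1) : ℝ)⁻¹ :=
  if_neg (lt_irrefl N)

lemma sylvFraction_pos (hg : 0 < g) (N i : ℕ) : 0 < sylvFraction g N i := by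
  have := tsylv_pos hg N
  have := sylv_pos g i
  unfold sylvFraction
  split_ifs <;> positivity

lemma prod_range_sylvFraction (hg : 0 < g) {N k : ℕ} (hk : k ≤ N) :
    ∏ i ∈ range k, sylvFraction g N i = g / tsylv g (k + 1) := by
  have hprod : (∏ i ∈ range k, (sylv g (i + 1) : ℝ)) ≠ 0 :=
    prod_ne_zero_iff.2 fun i _ ↦ mod_cast (sylv_pos g i).ne'
  have hg' : (g : ℝ) ≠ 0 := mod_cast hg.ne'
  rw [prod_congr rfl fun i hi ↦ sylvFraction_of_lt ((mem_range.1 hi).trans_le hk), prod_inv_distrib,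
    ← prod_sylv_mul]
  push_cast
  field_simp

lemma sum_Ico_sylvFraction (hg : 0 < g) {N k : ℕ} (hk : k ≤ N) :
    ∑ i ∈ Ico k (N + 1), sylvFraction g N i = (tsylv g (k + 1) : ℝ)⁻¹ := by
  have sum_range {l : ℕ} (hl : l ≤ N) :
      ∑ i ∈ range l, sylvFraction g N i = (g : ℝ)⁻¹ - (tsylv g (l + 1) : ℝ)⁻¹ := by
    rw [sum_congr rfl fun i hi ↦ sylvFraction_of_lt ((mem_range.1 hi).trans_le hl), sum_inv_sylv hg]
  rw [sum_Ico_succ_top hk, sum_Ico_eq_sub _ hk, sum_range hk, sum_range le_rfl, sylvFraction_self]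
  ring

lemma prod_sylvFraction (hg : 0 < g) (N : ℕ) :
    ∏ i ∈ range (N + 1), sylvFraction g N i = g / (tsylv g (N + 1) : ℝ) ^ 2 := by
  rw [prod_range_succ, prod_range_sylvFraction hg le_rfl, sylvFraction_self]
  ring

end Sylvester

section UnitFractions

lemma sylv_strictMono {g : ℕ} (hg : 0 < g) : StrictMono fun k ↦ sylv g (k + 1) :=
  strictMono_nat_of_lt_succ fun k ↦ by
    rw [sylv_eq_tsylv_add_one g (k + 1), tsylv_succ]
    exact Nat.lt_succ_of_le (Nat.le_mul_of_pos_right _ (tsylv_pos hg k))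

lemma eq_of_tsylv_le_two_mul_sylv {g N k : ℕ} (hNg : 2 ≤ N * g) (hk : k < N)
    (h : tsylv g (N + 1) ≤ 2 * sylv g (k + 1)) :
    N = 1 ∧ g = 2 ∧ k = 0 ∨ N = 2 ∧ g = 1 ∧ k = 1 := by
  have hg : 0 < g := Nat.pos_of_ne_zero (by rintro rfl; lia)
  obtain ⟨M, rfl⟩ : ∃ M, N = M + 1 := ⟨N - 1, by lia⟩
  have tsylv_le_two : tsylv g (M + 1) ≤ 2 := by
    have hle : sylv g (k + 1) ≤ sylv g (M + 1) := (sylv_strictMono hg).monotone (by lia : k ≤ M)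
    rw [tsylv_succ] at h
    exact Nat.le_of_mul_le_mul_left (by lia : sylv g (M + 1) * _ ≤ sylv g (M + 1) * 2)
      (sylv_pos g M)
  match M with
  | 0 =>
    rw [tsylv_one] at tsylv_le_two
    lia
  | M + 1 =>
    have h₂ : tsylv g 2 ≤ 2 := (tsylv_monotone _ (by lia : 1 ≤ M + 1)).trans tsylv_le_two
    obtain rfl : g = 1 := by
      rw [tsylv_succ, sylv_eq_tsylv_add_one, tsylv_one] at h₂
      nlinarith
    obtain rfl : M = 0 := by
      by_contra hM
      have h₃ : tsylv 1 3 ≤ 2 := (tsylv_monotone _ (by lia : 2 ≤ M + 1)).trans tsylv_le_two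
      simp [tsylv, sylv] at h₃
    obtain rfl | rfl : k = 0 ∨ k = 1 := by lia
    · simp [tsylv, sylv] at h
    · simp

/-- The tuple `A` of positive integers is a unit fraction partition of `1 / g`. -/
structure IsUnitFractionPartition (g : ℕ) {n : ℕ} (A : Fin n → ℕ) : Prop where
  pos : ∀ i, 0 < A i
  sum_inv : ∑ i, (A i : ℚ)⁻¹ = (g : ℚ)⁻¹

/-- The unit fractions `1 / A i`, with the last two of them added. -/
noncomputable def mergedFraction {N : ℕ} (A : Fin (N + 2) → ℕ) : Fin (N + 1) → ℝ :=
  Fin.snoc (fun i : Fin N ↦ (A i.castSucc.castSucc : ℝ)⁻¹)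
    ((A (Fin.last N).castSucc : ℝ)⁻¹ + (A (Fin.last (N + 1)) : ℝ)⁻¹)

variable {g N : ℕ} {A : Fin (N + 2) → ℕ}

lemma mergedFraction_castSucc (A : Fin (N + 2) → ℕ) (i : Fin N) :
    mergedFraction A i.castSucc = (A i.castSucc.castSucc : ℝ)⁻¹ :=
  Fin.snoc_castSucc ..

lemma mergedFraction_last (A : Fin (N + 2) → ℕ) : mergedFraction A (Fin.last N) =
    (A (Fin.last N).castSucc : ℝ)⁻¹ + (A (Fin.last (N + 1)) : ℝ)⁻¹ :=
  Fin.snoc_last ..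

lemma mergedFraction_of_ne_last (A : Fin (N + 2) → ℕ) {i : Fin (N + 1)} (hi : i ≠ Fin.last N) :
    mergedFraction A i = (A i.castSucc : ℝ)⁻¹ := by
  obtain ⟨i, rfl⟩ := Fin.exists_castSucc_eq.2 hi
  exact mergedFraction_castSucc A i

lemma mergedFraction_pos (hA : ∀ i, 0 < A i) (i : Fin (N + 1)) : 0 < mergedFraction A i := by
  have inv_pos (j) : 0 < (A j : ℝ)⁻¹ := by have := hA j; positivity
  refine Fin.lastCases ?_ (fun i ↦ ?_) i
  · rw [mergedFraction_last]
    exact add_pos (inv_pos _) (inv_pos _)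
  · rw [mergedFraction_castSucc]
    exact inv_pos _

lemma prod_mergedFraction_mul (hA : ∀ i, 0 < A i) :
    (∏ i, mergedFraction A i) * ∏ k : Fin (N + 1), (A k.castSucc : ℝ) =
      1 + A (Fin.last N).castSucc / A (Fin.last (N + 1)) := by
  have hA' (i) : (A i : ℝ) ≠ 0 := mod_cast (hA i).ne'
  have h₁ := hA' (Fin.last N).castSucc
  have h₂ := hA' (Fin.last (N + 1))
  rw [← prod_mul_distrib, Fin.prod_univ_castSucc, prod_eq_one fun i _ ↦ ?_, mergedFraction_last]
  · field_simp
  · rw [mergedFraction_castSucc, inv_mul_cancel₀ (hA' _)]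

-- Multiplying the right-hand side by `∏ Aᵢ` gives a positive integer.
lemma prod_inv_le_one_sub_mul_sum_inv {ι : Type*} (g : ℕ) {A : ι → ℕ} (hA : ∀ i, 0 < A i)
    {I : Finset ι} (hpos : 0 < 1 - g * ∑ i ∈ I, (A i : ℝ)⁻¹) :
    ∏ i ∈ I, (A i : ℝ)⁻¹ ≤ 1 - g * ∑ i ∈ I, (A i : ℝ)⁻¹ := by
  classical
  have hprod : (0 : ℝ) < ∏ i ∈ I, (A i : ℝ) := prod_pos fun i _ ↦ mod_cast hA i
  have hint : (1 - g * ∑ i ∈ I, (A i : ℝ)⁻¹) * ∏ i ∈ I, (A i : ℝ) =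
      ((∏ i ∈ I, (A i : ℤ) - g * ∑ i ∈ I, ∏ j ∈ I.erase i, (A j : ℤ) : ℤ) : ℝ) := by
    push_cast
    rw [sub_mul, one_mul, mul_assoc, sum_mul]
    congr 2
    refine sum_congr rfl fun i hi ↦ ?_
    rw [← mul_prod_erase I _ hi, inv_mul_cancel_left₀ (mod_cast (hA i).ne')]
  have hscaled := mul_pos hpos hprod
  rw [prod_inv_distrib, inv_le_iff_one_le_mul₀ hprod]
  rw [hint] at hscaled ⊢
  exact mod_cast hscaled

namespace IsUnitFractionPartition

lemma sum_inv_real (h : IsUnitFractionPartition g A) : ∑ i, (A i : ℝ)⁻¹ = (g : ℝ)⁻¹ := by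
  have := congrArg (Rat.cast : ℚ → ℝ) h.sum_inv
  push_cast at this
  exact this

lemma index_pos (h : IsUnitFractionPartition g A) : 0 < g := by
  have : 0 < (g : ℚ)⁻¹ := h.sum_inv ▸
    sum_pos (fun i _ ↦ inv_pos.2 (mod_cast h.pos i)) univ_nonempty
  exact_mod_cast inv_pos.1 this

lemma sum_mergedFraction (h : IsUnitFractionPartition g A) :
    ∑ i, mergedFraction A i = (g : ℝ)⁻¹ := by
  simp_rw [← h.sum_inv_real, Fin.sum_univ_castSucc, mergedFraction_castSucc, mergedFraction_last,
    add_assoc]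

lemma mergedFraction_castSucc_le_half (h : IsUnitFractionPartition g A) (i : Fin N) :
    mergedFraction A i.castSucc ≤ 1 / 2 := by
  have hlt : mergedFraction A i.castSucc < 1 := calc
    mergedFraction A i.castSucc
      < mergedFraction A i.castSucc + mergedFraction A (Fin.last N) :=
        lt_add_of_pos_right _ (mergedFraction_pos h.pos _)
    _ = ∑ j ∈ {i.castSucc, Fin.last N}, mergedFraction A j :=
        (sum_pair (Fin.castSucc_lt_last i).ne).symm
    _ ≤ ∑ j, mergedFraction A j :=
        sum_le_univ_sum_of_nonneg fun j ↦ (mergedFraction_pos h.pos j).le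
    _ ≤ 1 := h.sum_mergedFraction ▸ Nat.cast_inv_le_one g
  rw [mergedFraction_castSucc] at hlt ⊢
  have one_lt : 1 < A i.castSucc.castSucc := by
    have := (inv_lt_one₀ (Nat.cast_pos.2 (h.pos _))).1 hlt
    exact_mod_cast this
  rw [← one_div]
  exact one_div_le_one_div_of_le two_pos (mod_cast one_lt)

lemma prod_mergedFraction_le_of_last_notMem (h : IsUnitFractionPartition g A)
    {I : Finset (Fin (N + 1))} (hlast : Fin.last N ∉ I) :
    ∏ i ∈ I, mergedFraction A i ≤ g * ∑ i ∈ Iᶜ, mergedFraction A i := by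
  have hval : ∀ i ∈ I, mergedFraction A i = (A i.castSucc : ℝ)⁻¹ := fun i hi ↦
    mergedFraction_of_ne_last A (ne_of_mem_of_not_mem hi hlast)
  have hcompl : g * ∑ i ∈ Iᶜ, mergedFraction A i = 1 - g * ∑ i ∈ I, (A i.castSucc : ℝ)⁻¹ := by
    have hg : (g : ℝ) ≠ 0 := mod_cast h.index_pos.ne'
    rw [← sum_congr rfl hval, eq_sub_iff_add_eq', ← mul_add, sum_add_sum_compl,
      h.sum_mergedFraction, mul_inv_cancel₀ hg]
  have hpos : 0 < g * ∑ i ∈ Iᶜ, mergedFraction A i :=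
    mul_pos (mod_cast h.index_pos)
      (sum_pos (fun i _ ↦ mergedFraction_pos h.pos i) ⟨Fin.last N, mem_compl.2 hlast⟩)
  rw [prod_congr rfl hval, hcompl]
  exact prod_inv_le_one_sub_mul_sum_inv g (fun i : Fin (N + 1) ↦ h.pos i.castSucc) (hcompl ▸ hpos)

-- With `m = A_N`, the merged fraction is at most `2 / m` and all others are at least `1 / m`.
lemma prod_mergedFraction_le_of_last_mem (h : IsUnitFractionPartition g A) (hmono : Monotone A)
    (hNg : 2 ≤ N * g) {I : Finset (Fin (N + 1))} (hI : I ≠ univ) (hlast : Fin.last N ∈ I) :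
    ∏ i ∈ I, mergedFraction A i ≤ g * ∑ i ∈ Iᶜ, mergedFraction A i := by
  set m : ℝ := (A (Fin.last N).castSucc : ℝ)
  have inv_le {i j} (hij : i ≤ j) : (A j : ℝ)⁻¹ ≤ (A i : ℝ)⁻¹ :=
    inv_anti₀ (Nat.cast_pos.2 (h.pos i)) (Nat.cast_le.2 (hmono hij))
  have m_inv_pos : 0 < m⁻¹ := inv_pos.2 (Nat.cast_pos.2 (h.pos _))
  have last_le : mergedFraction A (Fin.last N) ≤ 2 * m⁻¹ := by
    rw [mergedFraction_last, two_mul]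
    exact add_le_add_right (inv_le (Fin.le_last _)) _
  have sum_ge : (#Iᶜ : ℝ) * m⁻¹ ≤ ∑ i ∈ Iᶜ, mergedFraction A i := by
    rw [← nsmul_eq_mul]
    refine card_nsmul_le_sum _ _ _ fun i hi ↦ ?_
    rw [mergedFraction_of_ne_last A (ne_of_mem_of_not_mem hlast (mem_compl.1 hi)).symm]
    exact inv_le (Fin.castSucc_le_castSucc_iff.2 (Fin.le_last i))
  refine le_trans ?_ (mul_le_mul_of_nonneg_left sum_ge g.cast_nonneg)
  rw [← mul_assoc, ← mul_prod_erase I _ hlast]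
  rcases (I.erase (Fin.last N)).eq_empty_or_nonempty with hempty | hnonempty
  · have hcard : #Iᶜ = N := by
      rw [card_compl, Fintype.card_fin, ← card_erase_add_one hlast, hempty]
      rfl
    rw [hempty, prod_empty, mul_one, hcard, mul_comm (g : ℝ)]
    exact last_le.trans (mul_le_mul_of_nonneg_right (mod_cast hNg) m_inv_pos.le)
  · have prod_le_half : ∏ i ∈ I.erase (Fin.last N), mergedFraction A i ≤ 1 / 2 := calc
      _ ≤ ∏ _i ∈ I.erase (Fin.last N), (1 / 2 : ℝ) := by
          refine prod_le_prod (fun i _ ↦ (mergedFraction_pos h.pos i).le) fun i hi ↦ ?_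
          obtain ⟨i, rfl⟩ := Fin.exists_castSucc_eq.2 (ne_of_mem_erase hi)
          exact h.mergedFraction_castSucc_le_half i
      _ ≤ 1 / 2 := by
          rw [prod_const]
          exact pow_le_of_le_one (by norm_num) (by norm_num) (card_ne_zero.2 hnonempty)
    have one_le : (1 : ℝ) ≤ g * #Iᶜ := mod_cast
      Nat.mul_pos h.index_pos (card_pos.2 (nonempty_iff_ne_empty.2
        ((compl_eq_empty_iff I).not.2 hI)))
    calc _ ≤ 2 * m⁻¹ * (1 / 2) :=
          mul_le_mul last_le prod_le_half
            (prod_nonneg fun i _ ↦ (mergedFraction_pos h.pos i).le) (by positivity)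
      _ = 1 * m⁻¹ := by ring
      _ ≤ g * #Iᶜ * m⁻¹ := mul_le_mul_of_nonneg_right one_le m_inv_pos.le

end IsUnitFractionPartition

end UnitFractions

section UnitFractionBound

/-- The denominators of the extremal unit fraction partition
`s_{g,1}, …, s_{g,N}, 2 t_{g,N+1}, 2 t_{g,N+1}`. -/
def sylvPartition (g N : ℕ) (i : Fin (N + 2)) : ℕ :=
  if i.val < N then sylv g (i.val + 1) else 2 * tsylv g (N + 1)

variable {g N : ℕ} {A : Fin (N + 2) → ℕ}

lemma sylvPartition_castSucc_castSucc (g : ℕ) (k : Fin N) :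
    sylvPartition g N k.castSucc.castSucc = sylv g (k + 1) :=
  if_pos k.isLt

lemma sylvPartition_castSucc_last (g N : ℕ) :
    sylvPartition g N (Fin.last N).castSucc = 2 * tsylv g (N + 1) :=
  if_neg (lt_irrefl N)

lemma sylvPartition_last (g N : ℕ) :
    sylvPartition g N (Fin.last (N + 1)) = 2 * tsylv g (N + 1) :=
  if_neg (by simp)

lemma sylvPartition_pos (hg : 0 < g) (i : Fin (N + 2)) : 0 < sylvPartition g N i := by
  unfold sylvPartition
  split_ifs
  · exact sylv_pos g _
  · exact Nat.mul_pos two_pos (tsylv_pos hg N)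

namespace IsUnitFractionPartition

lemma exists_perm_mergedFraction_eq (h : IsUnitFractionPartition g A) (hmono : Monotone A)
    (hNg : 2 ≤ N * g) (hlarge : 2 * tsylv g (N + 1) ^ 2 ≤ g * ∏ k : Fin (N + 1), A k.castSucc) :
    ∃ σ : Equiv.Perm (Fin (N + 1)), ∀ i, mergedFraction A (σ i) = sylvFraction g N i := by
  have hg := h.index_pos
  have ht : (0 : ℝ) < (tsylv g (N + 1) : ℝ) ^ 2 := by have := tsylv_pos hg N; positivity
  refine exists_perm_eq_of_prod_le_mul_sum_compl (Nat.cast_pos.2 hg) (mergedFraction_pos h.pos)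
    (sylvFraction_pos hg N) (fun I hI ↦ ?_) (fun k hk ↦ ?_) ?_
  · by_cases hlast : Fin.last N ∈ I
    · exact h.prod_mergedFraction_le_of_last_mem hmono hNg hI hlast
    · exact h.prod_mergedFraction_le_of_last_notMem hlast
  · rw [prod_range_sylvFraction hg hk, sum_Ico_sylvFraction hg hk, div_eq_mul_inv]
  · have hprod_pos : 0 < ∏ i, mergedFraction A i := prod_pos fun i _ ↦ mergedFraction_pos h.pos i
    have hratio : (A (Fin.last N).castSucc : ℝ) / A (Fin.last (N + 1)) ≤ 1 :=
      div_le_one_of_le₀ (Nat.cast_le.2 (hmono (Fin.le_last _))) (Nat.cast_nonneg _)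
    have hlarge' : 2 * (tsylv g (N + 1) : ℝ) ^ 2 ≤ g * ∏ k : Fin (N + 1), (A k.castSucc : ℝ) :=
      mod_cast hlarge
    rw [prod_sylvFraction hg, le_div_iff₀ ht]
    refine le_of_mul_le_mul_left (a := 2) ?_ two_pos
    calc 2 * ((∏ i, mergedFraction A i) * (tsylv g (N + 1) : ℝ) ^ 2)
        = (∏ i, mergedFraction A i) * (2 * (tsylv g (N + 1) : ℝ) ^ 2) := by ring
      _ ≤ (∏ i, mergedFraction A i) * (g * ∏ k : Fin (N + 1), (A k.castSucc : ℝ)) :=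
          mul_le_mul_of_nonneg_left hlarge' hprod_pos.le
      _ = g * ((∏ i, mergedFraction A i) * ∏ k : Fin (N + 1), (A k.castSucc : ℝ)) := by ring
      _ ≤ g * 2 := by
          rw [prod_mergedFraction_mul h.pos]
          exact mul_le_mul_of_nonneg_left (by linarith) g.cast_nonneg
      _ = 2 * g := mul_comm _ _

lemma last_two_eq_of_prod_ge (h : IsUnitFractionPartition g A) (hmono : Monotone A)
    (hNg : 2 ≤ N * g) (hlarge : 2 * tsylv g (N + 1) ^ 2 ≤ g * ∏ k : Fin (N + 1), A k.castSucc) :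
    A (Fin.last N).castSucc = A (Fin.last (N + 1)) ∧
      g * ∏ k : Fin (N + 1), A k.castSucc = 2 * tsylv g (N + 1) ^ 2 := by
  obtain ⟨σ, hσ⟩ := h.exists_perm_mergedFraction_eq hmono hNg hlarge
  have ht : (0 : ℝ) < (tsylv g (N + 1) : ℝ) ^ 2 := by
    have := tsylv_pos h.index_pos N
    positivity
  have hlast : (0 : ℝ) < A (Fin.last (N + 1)) := Nat.cast_pos.2 (h.pos _)
  have hprod : ∏ i, mergedFraction A i = g / (tsylv g (N + 1) : ℝ) ^ 2 := by
    rw [← prod_sylvFraction h.index_pos, ← Fin.prod_univ_eq_prod_range, ← Equiv.prod_comp σ]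
    exact prod_congr rfl fun i _ ↦ hσ i
  have hvalue := prod_mergedFraction_mul h.pos
  rw [hprod, div_mul_eq_mul_div, div_eq_iff ht.ne'] at hvalue
  have hlarge' : 2 * (tsylv g (N + 1) : ℝ) ^ 2 ≤ g * ∏ k : Fin (N + 1), (A k.castSucc : ℝ) :=
    mod_cast hlarge
  have hratio : (A (Fin.last N).castSucc : ℝ) / A (Fin.last (N + 1)) = 1 := by
    refine le_antisymm (div_le_one_of_le₀ (Nat.cast_le.2 (hmono (Fin.le_last _))) hlast.le) ?_
    rw [hvalue] at hlarge'
    linarith [le_of_mul_le_mul_right hlarge' ht]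
  refine ⟨mod_cast (div_eq_one_iff_eq hlast.ne').1 hratio, ?_⟩
  rw [hratio, one_add_one_eq_two] at hvalue
  exact_mod_cast hvalue

lemma mul_prod_castSucc_le (h : IsUnitFractionPartition g A) (hmono : Monotone A)
    (hNg : 2 ≤ N * g) : g * ∏ k : Fin (N + 1), A k.castSucc ≤ 2 * tsylv g (N + 1) ^ 2 :=
  le_of_not_gt fun hgt ↦ hgt.ne' (h.last_two_eq_of_prod_ge hmono hNg hgt.le).2

end IsUnitFractionPartition

lemma eq_two_mul_of_two_mul_inv_eq_inv {m n : ℕ} (h : 2 * (m : ℝ)⁻¹ = (n : ℝ)⁻¹) : m = 2 * n := by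
  rw [← inv_inj, mul_inv, inv_inv, inv_inv, inv_mul_eq_iff_eq_mul₀ two_ne_zero] at h
  exact_mod_cast h

lemma eq_sylvPartition_of_perm_last_eq (hmono : Monotone A) (hg : 0 < g)
    (hlast_eq : A (Fin.last N).castSucc = A (Fin.last (N + 1)))
    {σ : Equiv.Perm (Fin (N + 1))} (hσ : ∀ i, mergedFraction A (σ i) = sylvFraction g N i)
    (hσ_last : σ (Fin.last N) = Fin.last N) : A = sylvPartition g N := by
  have hvalue (k : Fin N) : A (σ k.castSucc).castSucc = sylv g (k + 1) := by
    have hne : σ k.castSucc ≠ Fin.last N := fun h ↦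
      (Fin.castSucc_lt_last k).ne (σ.injective (h.trans hσ_last.symm))
    have := hσ k.castSucc
    rw [mergedFraction_of_ne_last A hne, Fin.val_castSucc, sylvFraction_of_lt k.isLt] at this
    exact_mod_cast inv_injective this
  have hσ_mono : StrictMono σ := by
    refine Monotone.strictMono_of_injective (fun i j hij ↦ le_of_not_gt fun hlt ↦ ?_) σ.injective
    have hj : j ≠ Fin.last N := by
      rintro rfl
      exact (hσ_last ▸ hlt).not_ge (Fin.le_last _)
    obtain ⟨j, rfl⟩ := Fin.exists_castSucc_eq.2 hj
    obtain ⟨i, rfl⟩ := Fin.exists_castSucc_eq.2 (hij.trans_lt (Fin.castSucc_lt_last j)).ne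
    have hle := hmono (Fin.castSucc_le_castSucc_iff.2 hlt.le)
    rw [hvalue, hvalue] at hle
    have hji : j ≤ i := (sylv_strictMono hg).le_iff_le.1 hle
    exact hlt.ne (congrArg (fun k : Fin N ↦ σ k.castSucc) (le_antisymm hji hij))
  have hσ_id (i) : σ i = i := le_antisymm hσ_mono.apply_le hσ_mono.le_apply
  have hlast : A (Fin.last (N + 1)) = 2 * tsylv g (N + 1) := by
    have hsum := hσ (Fin.last N)
    rw [hσ_last, mergedFraction_last, hlast_eq, Fin.val_last, sylvFraction_self, ← two_mul] at hsum
    exact eq_two_mul_of_two_mul_inv_eq_inv hsum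
  funext i
  induction i using Fin.lastCases with
  | last => rw [hlast, sylvPartition_last]
  | cast i =>
    induction i using Fin.lastCases with
    | last => rw [hlast_eq, hlast, sylvPartition_castSucc_last]
    | cast k => rw [sylvPartition_castSucc_castSucc, ← hvalue k, hσ_id]

lemma eq_or_eq_of_perm_last_ne (hmono : Monotone A) (hNg : 2 ≤ N * g)
    (hlast_eq : A (Fin.last N).castSucc = A (Fin.last (N + 1)))
    {σ : Equiv.Perm (Fin (N + 1))} (hσ : ∀ i, mergedFraction A (σ i) = sylvFraction g N i)
    (hσ_last : σ (Fin.last N) ≠ Fin.last N) :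
    N = 1 ∧ g = 2 ∧ A (Fin.last (N + 1)) = 6 ∨ N = 2 ∧ g = 1 ∧ A (Fin.last (N + 1)) = 6 := by
  have hpre : σ.symm (Fin.last N) ≠ Fin.last N := fun h ↦ hσ_last ((Equiv.symm_apply_eq σ).1 h).symm
  obtain ⟨k, hk⟩ := Fin.exists_castSucc_eq.2 hpre
  have hA_last : A (Fin.last (N + 1)) = 2 * sylv g (k + 1) := by
    have hsum := hσ k.castSucc
    rw [hk, Equiv.apply_symm_apply, mergedFraction_last, hlast_eq, ← hk, Fin.val_castSucc,
      sylvFraction_of_lt k.isLt, ← two_mul] at hsum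
    exact eq_two_mul_of_two_mul_inv_eq_inv hsum
  have htsylv : tsylv g (N + 1) = A (σ (Fin.last N)).castSucc := by
    have hsum := hσ (Fin.last N)
    rw [mergedFraction_of_ne_last A hσ_last, Fin.val_last, sylvFraction_self] at hsum
    exact_mod_cast (inv_injective hsum).symm
  have hle : tsylv g (N + 1) ≤ 2 * sylv g (k + 1) := by
    rw [htsylv, ← hA_last]
    exact hmono (Fin.le_last _)
  rcases eq_of_tsylv_le_two_mul_sylv hNg k.isLt hle with ⟨rfl, rfl, hk⟩ | ⟨rfl, rfl, hk⟩
  · exact .inl ⟨rfl, rfl, by rw [hA_last, hk]; rfl⟩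
  · exact .inr ⟨rfl, rfl, by rw [hA_last, hk]; rfl⟩

namespace IsUnitFractionPartition

lemma eq_six_six_six {A : Fin 3 → ℕ} (h : IsUnitFractionPartition 2 A) (h₁ : A 1 = 6)
    (h₂ : A 2 = 6) : A = ![6, 6, 6] := by
  have hsum := h.sum_inv
  rw [Fin.sum_univ_three, h₁, h₂] at hsum
  have h₀_inv : (A 0 : ℚ)⁻¹ = (6 : ℚ)⁻¹ := by push_cast at hsum; linarith
  have h₀ : A 0 = 6 := by exact_mod_cast inv_injective h₀_inv
  simp [funext_iff, Fin.forall_fin_succ, h₀, h₁, h₂]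

lemma eq_two_six_six_six {A : Fin 4 → ℕ} (h : IsUnitFractionPartition 1 A) (hmono : Monotone A)
    (h₂ : A 2 = 6) (h₃ : A 3 = 6) (hprod : ∏ k : Fin 3, A k.castSucc = 72) :
    A = ![2, 6, 6, 6] := by
  have hsum := h.sum_inv
  have ha : (A 0 : ℚ) ≠ 0 := mod_cast (h.pos 0).ne'
  have hb : (A 1 : ℚ) ≠ 0 := mod_cast (h.pos 1).ne'
  rw [Fin.sum_univ_four, h₂, h₃] at hsum
  have hmul : A 0 * A 1 = 12 := by
    simp only [Fin.prod_univ_three, Fin.castSucc_zero, Fin.castSucc_one, Fin.reduceCastSucc, h₂]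
      at hprod
    lia
  have hadd : A 0 + A 1 = 8 := by
    have hmul' : (A 0 * A 1 : ℚ) = 12 := mod_cast hmul
    field_simp at hsum
    push_cast at hsum
    have : (A 0 + A 1 : ℚ) = 8 := by nlinarith
    exact_mod_cast this
  have hle : A 0 ≤ A 1 := hmono (by simp)
  have h₀ : A 0 = 2 := by
    have : A 0 ≤ 4 := by lia
    interval_cases A 0 <;> lia
  have h₁ : A 1 = 6 := by lia
  simp [funext_iff, Fin.forall_fin_succ, h₀, h₁, h₂, h₃]

lemma eq_of_mul_prod_castSucc_eq (h : IsUnitFractionPartition g A) (hmono : Monotone A)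
    (hNg : 2 ≤ N * g) (heq : g * ∏ k : Fin (N + 1), A k.castSucc = 2 * tsylv g (N + 1) ^ 2) :
    A = sylvPartition g N ∨ (N = 1 ∧ g = 2 ∧ ∀ i, A i = 6) ∨
      (N = 2 ∧ g = 1 ∧ ∀ i, A i = if i = 0 then 2 else 6) := by
  obtain ⟨σ, hσ⟩ := h.exists_perm_mergedFraction_eq hmono hNg heq.ge
  have hlast_eq := (h.last_two_eq_of_prod_ge hmono hNg heq.ge).1
  by_cases hσ_last : σ (Fin.last N) = Fin.last N
  · exact .inl (eq_sylvPartition_of_perm_last_eq hmono h.index_pos hlast_eq hσ hσ_last)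
  · right
    rcases eq_or_eq_of_perm_last_ne hmono hNg hlast_eq hσ hσ_last with
      ⟨rfl, rfl, hlast⟩ | ⟨rfl, rfl, hlast⟩
    · rw [h.eq_six_six_six (hlast_eq.trans hlast) hlast]
      exact .inl ⟨rfl, rfl, by decide⟩
    · rw [h.eq_two_six_six_six hmono (hlast_eq.trans hlast) hlast
        (by simpa [tsylv, sylv] using heq)]
      exact .inr ⟨rfl, rfl, by decide⟩

end IsUnitFractionPartition

end UnitFractionBound

section Homogenization

open Matrix

variable {R : Type*} {d : ℕ}

/-- The matrix with rows `(c, v i)`: the vertices `v` lifted to height `c` in one dimension more. -/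
def homogenize (c : R) (v : Fin (d + 1) → Fin d → R) : Matrix (Fin (d + 1)) (Fin (d + 1)) R :=
  of fun i ↦ Fin.cons c (v i)

/-- The matrix whose rows are the vertices of the facet opposite to the vertex `e`. -/
def facetMatrix (v : Fin (d + 1) → Fin d → R) (e : Fin (d + 1)) : Matrix (Fin d) (Fin d) R :=
  of fun k ↦ v (e.succAbove k)

@[simp]
lemma homogenize_apply_zero (c : R) (v : Fin (d + 1) → Fin d → R) (i : Fin (d + 1)) :
    homogenize c v i 0 = c := rfl

@[simp]
lemma homogenize_apply_succ (c : R) (v : Fin (d + 1) → Fin d → R) (i : Fin (d + 1)) (j : Fin d) :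
    homogenize c v i j.succ = v i j := rfl

variable [CommRing R]

lemma homogenize_mul_transpose_apply (b c : R) (u v : Fin (d + 1) → Fin d → R)
    (i j : Fin (d + 1)) : (homogenize b u * (homogenize c v)ᵀ) i j = b * c + u i ⬝ᵥ v j := by
  simp [mul_apply, Fin.sum_univ_succ, dotProduct]

lemma vecMul_homogenize (c : R) (v : Fin (d + 1) → Fin d → R) (w : Fin (d + 1) → R) :
    w ᵥ* homogenize c v = Fin.cons ((∑ i, w i) * c) (∑ i, w i • v i) := by
  ext j
  cases j using Fin.cases <;> simp [vecMul, dotProduct, sum_mul, Finset.sum_apply]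

lemma det_homogenize (c : R) (v : Fin (d + 1) → Fin d → R) :
    (homogenize c v).det = c * (homogenize 1 v).det := by
  have h : homogenize c v = (homogenize 1 v).updateCol 0 (c • fun _ ↦ 1) := by
    ext i j
    cases j using Fin.cases <;> simp [Fin.succ_ne_zero]
  have h' : (homogenize 1 v).updateCol 0 (fun _ ↦ 1) = homogenize 1 v := by
    ext i j
    cases j using Fin.cases <;> simp [Fin.succ_ne_zero]
  rw [h, det_updateCol_smul, h']

lemma det_homogenize_one (v : Fin (d + 1) → Fin d → R) :
    (homogenize 1 v).det = (of fun i j : Fin d ↦ v i.succ j - v 0 j).det := by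
  let B : Matrix (Fin (d + 1)) (Fin (d + 1)) R :=
    of fun i j ↦ homogenize 1 v i j - (if i = 0 then 0 else 1) * homogenize 1 v 0 j
  have hB : (homogenize 1 v).det = B.det :=
    det_eq_of_forall_row_eq_smul_add_const (fun i ↦ if i = 0 then 0 else 1) 0 (by simp)
      (by simp [B])
  rw [hB, det_succ_column_zero, Fin.sum_univ_succ, sum_eq_zero (by simp [B])]
  simp only [Fin.succAbove_zero, Fin.val_zero, pow_zero, one_mul, add_zero]
  rw [show B 0 0 = 1 by simp [B], one_mul]
  congr 1
  ext i j
  simp [B]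

/-- Replacing the row `e` by the combination with coefficients `w` multiplies the determinant
by `w e` and turns that row into `(1, 0, …, 0)`. -/
lemma weight_mul_det_homogenize_one (v : Fin (d + 1) → Fin d → R) {w : Fin (d + 1) → R}
    (hw : ∑ i, w i = 1) (hwv : ∑ i, w i • v i = 0) (e : Fin (d + 1)) :
    w e * (homogenize 1 v).det = (-1) ^ (e : ℕ) * (facetMatrix v e).det := by
  have hrow : ∑ k, w k • homogenize 1 v k = Fin.cons 1 0 := by
    have h := vecMul_homogenize 1 v w
    rwa [hw, hwv, mul_one, vecMul_eq_sum] at h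
  rw [← smul_eq_mul, ← det_updateRow_sum, hrow, det_succ_row _ e, Fin.sum_univ_succ,
    sum_eq_zero (by simp)]
  simp only [updateRow_self, Fin.cons_zero, Fin.val_zero, add_zero, mul_one,
    Fin.succAbove_zero]
  congr 2
  ext i j
  simp [facetMatrix, Fin.succAbove_ne]

end Homogenization

section NormalizedVolume

open Matrix

variable {d : ℕ} {v : Fin (d + 1) → Fin d → ℚ}

lemma normVol_eq_abs_det_homogenize (v : Fin (d + 1) → Fin d → ℚ) :
    normVol v = |(homogenize 1 v).det| := by
  rw [det_homogenize_one, normVol]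

lemma det_homogenize_one_ne_zero (hv : AffineIndependent ℚ v) :
    (homogenize 1 v).det ≠ 0 := by
  intro h0
  obtain ⟨c, hc, hcv⟩ := exists_vecMul_eq_zero_iff.2 h0
  rw [vecMul_homogenize, mul_one] at hcv
  refine hc (funext fun i ↦ affineIndependent_iff.1 hv univ c ?_ ?_ i (mem_univ i))
  · exact congrFun hcv 0
  · exact funext fun j ↦ congrFun hcv j.succ

lemma normVol_comp_perm (v : Fin (d + 1) → Fin d → ℚ) (σ : Equiv.Perm (Fin (d + 1))) :
    normVol (v ∘ σ) = normVol v := by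
  have h : homogenize 1 (v ∘ σ) = (homogenize 1 v).submatrix σ id := rfl
  rw [normVol_eq_abs_det_homogenize, normVol_eq_abs_det_homogenize, h, det_permute, abs_mul]
  rcases Int.units_eq_one_or (Equiv.Perm.sign σ) with hσ | hσ <;> simp [hσ]

lemma normVol_mulVec (U : Matrix (Fin d) (Fin d) ℚ) (v : Fin (d + 1) → Fin d → ℚ) :
    normVol (fun i ↦ U *ᵥ v i) = |U.det| * normVol v := by
  have h : (of fun i j : Fin d ↦ (U *ᵥ v i.succ) j - (U *ᵥ v 0) j) =
      (of fun i j : Fin d ↦ v i.succ j - v 0 j) * Uᵀ := by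
    ext i j
    simp only [of_apply, mul_apply, transpose_apply, mulVec, dotProduct, ← sum_sub_distrib]
    exact sum_congr rfl fun k _ ↦ by ring
  rw [normVol, normVol, h, det_mul, det_transpose, abs_mul, mul_comm]

end NormalizedVolume

section DualPair

open Matrix

variable {d : ℕ} {g : ℚ} {v u : Fin (d + 1) → Fin d → ℚ} {A : Fin (d + 1) → ℚ}

/-- The vertex tuple `v` of a simplex and the vertex tuple `u` of `g` times its dual: `u i` is the
vertex at which `⟨·, v j⟩ ≥ -g` is an equality for every `j ≠ i`. The number `A i` is the distance
of `u i` from the remaining inequality, and `g / A i` is the `i`-th barycentric coordinate of the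
origin with respect to `v` as well as with respect to `u`. -/
structure IsDualPair (g : ℚ) (v u : Fin (d + 1) → Fin d → ℚ) (A : Fin (d + 1) → ℚ) : Prop where
  pos : ∀ i, 0 < A i
  dotProduct_eq : ∀ i j, u i ⬝ᵥ v j = (if i = j then A i else 0) - g

namespace IsDualPair

lemma symm (h : IsDualPair g v u A) : IsDualPair g u v A where
  pos := h.pos
  dotProduct_eq i j := by
    rw [dotProduct_comm, h.dotProduct_eq]
    grind

lemma comp_perm (h : IsDualPair g v u A) (σ : Equiv.Perm (Fin (d + 1))) :
    IsDualPair g (v ∘ σ) (u ∘ σ) (A ∘ σ) where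
  pos i := h.pos (σ i)
  dotProduct_eq i j := by simp [h.dotProduct_eq]

lemma homogenize_mul_transpose (h : IsDualPair g v u A) :
    homogenize g u * (homogenize 1 v)ᵀ = diagonal A := by
  ext i j
  rw [homogenize_mul_transpose_apply, h.dotProduct_eq, diagonal_apply]
  ring

lemma transpose_mul_diagonal_inv_mul_homogenize (h : IsDualPair g v u A) :
    (homogenize 1 v)ᵀ * (diagonal (fun i ↦ (A i)⁻¹) * homogenize g u) = 1 := by
  rw [mul_eq_one_comm, Matrix.mul_assoc, h.homogenize_mul_transpose, diagonal_mul_diagonal]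
  simp [(h.pos _).ne']

lemma sum_weights (h : IsDualPair g v u A) (c : ℚ) (x : Fin d → ℚ) :
    (∑ i, (c + x ⬝ᵥ v i) / A i) * g = c ∧ ∑ i, ((c + x ⬝ᵥ v i) / A i) • u i = x := by
  have hcoord : (Fin.cons c x ᵥ* (homogenize 1 v)ᵀ) ᵥ* diagonal (fun i ↦ (A i)⁻¹) =
      fun i ↦ (c + x ⬝ᵥ v i) / A i := by
    ext i
    simp [vecMul, dotProduct, Fin.sum_univ_succ, diagonal_apply, div_eq_mul_inv]
  have hcons := congrArg (Fin.cons c x ᵥ* ·) h.transpose_mul_diagonal_inv_mul_homogenize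
  rw [← vecMul_vecMul, ← vecMul_vecMul, hcoord, vecMul_homogenize, vecMul_one] at hcons
  exact Fin.cons_inj.1 hcons

lemma sum_inv_mul (h : IsDualPair g v u A) : (∑ i, (A i)⁻¹) * g = 1 := by
  simpa using (h.sum_weights 1 0).1

lemma sum_inv_smul_dual (h : IsDualPair g v u A) : ∑ i, (A i)⁻¹ • u i = 0 := by
  simpa using (h.sum_weights 1 0).2

lemma index_pos (h : IsDualPair g v u A) : 0 < g :=
  pos_of_mul_pos_right (h.sum_inv_mul ▸ one_pos) (sum_nonneg fun i _ ↦ (inv_pos.2 (h.pos i)).le)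

lemma sum_inv (h : IsDualPair g v u A) : ∑ i, (A i)⁻¹ = g⁻¹ :=
  eq_inv_of_mul_eq_one_left h.sum_inv_mul

lemma normVol_pos (h : IsDualPair g v u A) : 0 < normVol v := by
  have hdet := congrArg det h.transpose_mul_diagonal_inv_mul_homogenize
  rw [det_mul, det_transpose, det_one] at hdet
  rw [normVol_eq_abs_det_homogenize, abs_pos]
  exact left_ne_zero_of_mul_eq_one hdet

lemma mul_normVol_mul_normVol (h : IsDualPair g v u A) :
    g * normVol u * normVol v = ∏ i, A i := by
  have hdet := congrArg (|det ·|) h.homogenize_mul_transpose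
  simp only [det_mul, det_transpose, det_diagonal, det_homogenize g, abs_mul] at hdet
  rwa [abs_of_pos h.index_pos, abs_of_pos (prod_pos fun i _ ↦ h.pos i),
    ← normVol_eq_abs_det_homogenize, ← normVol_eq_abs_det_homogenize] at hdet

lemma abs_det_facetMatrix_dual (h : IsDualPair g v u A) (e : Fin (d + 1)) :
    |(facetMatrix u e).det| = g / A e * normVol u := by
  have hw : ∑ i, g / A i = 1 := by
    simp_rw [div_eq_mul_inv, ← mul_sum, mul_comm g, h.sum_inv_mul]
  have hwu : ∑ i, (g / A i) • u i = 0 := by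
    simp_rw [div_eq_mul_inv, mul_smul, ← smul_sum, h.sum_inv_smul_dual, smul_zero]
  have hdet := congrArg abs (weight_mul_det_homogenize_one u hw hwu e)
  rw [abs_mul, abs_mul, abs_neg_one_pow, one_mul, ← normVol_eq_abs_det_homogenize,
    abs_of_pos (div_pos h.index_pos (h.pos e))] at hdet
  exact hdet.symm

lemma abs_det_facetMatrix_dual_mul_normVol (h : IsDualPair g v u A) (e : Fin (d + 1)) :
    |(facetMatrix u e).det| * normVol v = ∏ k, A (e.succAbove k) := by
  rw [h.abs_det_facetMatrix_dual, div_mul_eq_mul_div, div_mul_eq_mul_div, h.mul_normVol_mul_normVol,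
    div_eq_iff (h.pos e).ne', Fin.prod_univ_succAbove A e, mul_comm]

lemma isUnitFractionPartition {g : ℕ} {A : Fin (d + 1) → ℕ}
    (h : IsDualPair g v u fun i ↦ (A i : ℚ)) : IsUnitFractionPartition g A where
  pos i := Nat.cast_pos.1 (h.pos i)
  sum_inv := h.sum_inv

end IsDualPair

end DualPair

section DualBody

open Matrix

variable {d : ℕ} {g : ℚ} {v u : Fin (d + 1) → Fin d → ℚ} {A : Fin (d + 1) → ℚ}

lemma convex_dualBody (S : Set (Fin d → ℚ)) : Convex ℚ (dualBody S) := by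
  intro x hx y hy a b ha hb hab z hz
  have hadd : (a • x + b • y) ⬝ᵥ z = a * (x ⬝ᵥ z) + b * (y ⬝ᵥ z) := by
    simp only [add_dotProduct, smul_dotProduct, smul_eq_mul]
  have hxz : -1 ≤ x ⬝ᵥ z := hx z hz
  have hyz : -1 ≤ y ⬝ᵥ z := hy z hz
  change -1 ≤ (a • x + b • y) ⬝ᵥ z
  nlinarith

lemma mem_smul_dualBody_simplexHull (hg : 0 < g) {x : Fin d → ℚ} :
    x ∈ g • dualBody (simplexHull v) ↔ ∀ i, -g ≤ x ⬝ᵥ v i := by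
  have hscale (y : Fin d → ℚ) : -1 ≤ (g⁻¹ • x) ⬝ᵥ y ↔ -g ≤ x ⬝ᵥ y := by
    rw [smul_dotProduct, smul_eq_mul, inv_mul_eq_div, le_div_iff₀ hg, neg_one_mul]
  have hconvex : Convex ℚ {y : Fin d → ℚ | -g ≤ x ⬝ᵥ y} :=
    convex_halfSpace_ge (dotProductBilin ℚ ℚ x).isLinear _
  rw [Set.mem_smul_set_iff_inv_smul_mem₀ hg.ne']
  refine ⟨fun h i ↦ (hscale _).1 (h _ (subset_convexHull ℚ _ ⟨i, rfl⟩)),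
    fun h y hy ↦ (hscale y).2 (convexHull_min ?_ hconvex hy)⟩
  rintro _ ⟨i, rfl⟩
  exact h i

namespace IsDualPair

lemma neg_index_le_dotProduct (h : IsDualPair g v u A) (i j : Fin (d + 1)) :
    -g ≤ u i ⬝ᵥ v j := by
  rw [h.dotProduct_eq]
  have := (h.pos i).le
  split_ifs <;> linarith

lemma eq_of_forall_ne_dotProduct_eq (h : IsDualPair g v u A) {i : Fin (d + 1)} {x : Fin d → ℚ}
    (hx : ∀ j, j ≠ i → x ⬝ᵥ v j = -g) : x = u i := by
  obtain ⟨hsum, hcomb⟩ := h.sum_weights g x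
  have hzero (j : Fin (d + 1)) (hj : j ≠ i) : (g + x ⬝ᵥ v j) / A j = 0 := by simp [hx j hj]
  rw [Fintype.sum_eq_single i hzero, mul_eq_right₀ h.index_pos.ne'] at hsum
  rw [Fintype.sum_eq_single i fun j hj ↦ by rw [hzero j hj, zero_smul], hsum, one_smul] at hcomb
  exact hcomb.symm

theorem smul_dualBody_simplexHull (h : IsDualPair g v u A) :
    g • dualBody (simplexHull v) = convexHull ℚ (Set.range u) := by
  apply Set.Subset.antisymm
  · intro x hx
    rw [mem_smul_dualBody_simplexHull h.index_pos] at hx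
    obtain ⟨hsum, hcomb⟩ := h.sum_weights g x
    rw [← hcomb]
    refine (convex_convexHull ℚ _).sum_mem (fun i _ ↦ div_nonneg (by linarith [hx i]) (h.pos i).le)
      ((mul_eq_right₀ h.index_pos.ne').1 hsum) fun i _ ↦ subset_convexHull ℚ _ ⟨i, rfl⟩
  · refine convexHull_min ?_ ((convex_dualBody _).smul g)
    rintro _ ⟨i, rfl⟩
    exact (mem_smul_dualBody_simplexHull h.index_pos).2 (h.neg_index_le_dotProduct i)

lemma mem_extremePoints (h : IsDualPair g v u A) (i : Fin (d + 1)) :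
    u i ∈ (g • dualBody (simplexHull v)).extremePoints ℚ := by
  refine ⟨(mem_smul_dualBody_simplexHull h.index_pos).2 (h.neg_index_le_dotProduct i), ?_⟩
  rintro x hx y hy ⟨a, b, ha, hb, hab, hxy⟩
  rw [mem_smul_dualBody_simplexHull h.index_pos] at hx hy
  refine h.eq_of_forall_ne_dotProduct_eq fun j hj ↦ ?_
  have hj' := congrArg (· ⬝ᵥ v j) hxy
  simp only [add_dotProduct, smul_dotProduct, smul_eq_mul, h.dotProduct_eq, if_neg hj.symm] at hj'
  have hsum : a * (x ⬝ᵥ v j + g) + b * (y ⬝ᵥ v j + g) = 0 := by linear_combination hj' + g * hab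
  have hx_nonneg : 0 ≤ a * (x ⬝ᵥ v j + g) := mul_nonneg ha.le (by linarith [hx j])
  have hy_nonneg : 0 ≤ b * (y ⬝ᵥ v j + g) := mul_nonneg hb.le (by linarith [hy j])
  have hx_zero := ((add_eq_zero_iff_of_nonneg hx_nonneg hy_nonneg).1 hsum).1
  exact eq_neg_of_add_eq_zero_left ((mul_eq_zero.1 hx_zero).resolve_left ha.ne')

theorem isLatticeSet_iff (h : IsDualPair g v u A) :
    IsLatticeSet (g • dualBody (simplexHull v)) ↔ ∀ i, ∃ z, toQ z = u i := by
  constructor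
  · intro hlattice i
    have hmem := h.mem_extremePoints i
    rw [IsLatticeSet] at hlattice
    rw [hlattice] at hmem
    choose z hz using (extremePoints_convexHull_subset hmem).2
    exact ⟨z, funext fun j ↦ (hz j).symm⟩
  · intro hu
    apply Set.Subset.antisymm
    · rw [h.smul_dualBody_simplexHull]
      refine convexHull_mono ?_
      rintro _ ⟨i, rfl⟩
      obtain ⟨z, hz⟩ := hu i
      exact ⟨subset_convexHull ℚ _ ⟨i, rfl⟩, fun j ↦ ⟨z j, (congrFun hz j).symm⟩⟩
    · exact convexHull_min (fun x hx ↦ hx.1) ((convex_dualBody _).smul g)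

end IsDualPair

theorem exists_isDualPair (hv : AffineIndependent ℚ v) (h0 : OriginInInterior v) (hg : 0 < g) :
    ∃ u A, IsDualPair g v u A := by
  obtain ⟨w, hw_pos, hw_sum, hw_zero⟩ := h0
  set B := (homogenize 1 v)ᵀ with hB
  have hB_unit : IsUnit B.det := by
    rw [hB, det_transpose]
    exact (det_homogenize_one_ne_zero hv).isUnit
  let C := diagonal (fun i ↦ g / w i) * B⁻¹
  have hCB : C * B = diagonal (fun i ↦ g / w i) := nonsing_inv_mul_cancel_right _ _ hB_unit
  have hBw : B *ᵥ w = Pi.single 0 1 := by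
    ext j
    rw [hB, mulVec_transpose, vecMul_homogenize, hw_sum]
    cases j using Fin.cases <;> simp [Finset.sum_apply, hw_zero]
  have hC0 (i : Fin (d + 1)) : C i 0 = g := by
    have hCw : C *ᵥ Pi.single 0 1 = diagonal (fun i ↦ g / w i) *ᵥ w := by
      rw [← hBw, mulVec_mulVec, hCB]
    simpa [mulVec_diagonal, (hw_pos i).ne'] using congrFun hCw i
  have hC : homogenize g (fun i j ↦ C i j.succ) = C := by
    ext i j
    cases j using Fin.cases <;> simp [hC0]
  refine ⟨fun i j ↦ C i j.succ, fun i ↦ g / w i, fun i ↦ div_pos hg (hw_pos i), fun i j ↦ ?_⟩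
  have hij := homogenize_mul_transpose_apply g 1 (fun i j ↦ C i j.succ) v i j
  rw [hC, ← hB, hCB, diagonal_apply, mul_one] at hij
  rw [hij, add_sub_cancel_left]

end DualBody

section LatticeDualPair

open Matrix

variable {d g : ℕ} {v u : Fin (d + 1) → Fin d → ℤ}

lemma toQ_dotProduct_toQ (x y : Fin d → ℤ) : toQ x ⬝ᵥ toQ y = ((x ⬝ᵥ y : ℤ) : ℚ) := by
  simp [toQ, dotProduct]

lemma facetMatrix_toQ (u : Fin (d + 1) → Fin d → ℤ) (e : Fin (d + 1)) :
    facetMatrix (fun i ↦ toQ (u i)) e = (facetMatrix u e).map Int.cast := rfl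

lemma det_map_intCast (M : Matrix (Fin d) (Fin d) ℤ) :
    (M.map (Int.cast : ℤ → ℚ)).det = M.det :=
  ((Int.castRingHom ℚ).map_det M).symm

lemma map_intCast_mul (M N : Matrix (Fin d) (Fin d) ℤ) :
    (M * N).map (Int.cast : ℤ → ℚ) = M.map Int.cast * N.map Int.cast :=
  Matrix.map_mul (f := Int.castRingHom ℚ)

lemma IsPrimitive.dvd_det {M : Matrix (Fin d) (Fin d) ℤ} {x y : Fin d → ℤ} {m : ℤ}
    (hx : IsPrimitive x) (h : M *ᵥ x = m • y) : m ∣ M.det := by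
  have hadj : M.det • x = m • (M.adjugate *ᵥ y) := by
    rw [← mulVec_smul, ← h, mulVec_mulVec, adjugate_mul, smul_mulVec, one_mulVec]
  have hdvd : m ∣ univ.gcd fun i ↦ M.det * x i :=
    dvd_gcd fun i _ ↦ ⟨(M.adjugate *ᵥ y) i, congrFun hadj i⟩
  rw [Finset.gcd_mul_left, show univ.gcd x = 1 from hx, mul_one] at hdvd
  exact dvd_normalize_iff.1 hdvd

namespace IsDualPair

variable {A : Fin (d + 1) → ℚ}

lemma dvd_det_facetMatrix (h : IsDualPair g (fun i ↦ toQ (v i)) (fun i ↦ toQ (u i)) A)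
    {e : Fin (d + 1)} (he : IsPrimitive (v e)) : (g : ℤ) ∣ (facetMatrix u e).det := by
  refine he.dvd_det (y := -1) (funext fun k ↦ ?_)
  have hk := h.dotProduct_eq (e.succAbove k) e
  rw [toQ_dotProduct_toQ, if_neg (e.succAbove_ne k), zero_sub] at hk
  simpa using mod_cast hk

lemma natAbs_det_facetMatrix_mul_normVol
    (h : IsDualPair g (fun i ↦ toQ (v i)) (fun i ↦ toQ (u i)) A) (e : Fin (d + 1)) :
    (facetMatrix u e).det.natAbs * normVol (fun i ↦ toQ (v i)) = ∏ k, A (e.succAbove k) := by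
  rw [← h.abs_det_facetMatrix_dual_mul_normVol, facetMatrix_toQ, det_map_intCast, Nat.cast_natAbs,
    Int.cast_abs]

lemma mul_normVol_le_prod_succAbove
    (h : IsDualPair g (fun i ↦ toQ (v i)) (fun i ↦ toQ (u i)) A)
    {e : Fin (d + 1)} (he : IsPrimitive (v e)) :
    g * normVol (fun i ↦ toQ (v i)) ≤ ∏ k, A (e.succAbove k) := by
  have hprod := h.natAbs_det_facetMatrix_mul_normVol e
  have hdet_pos : 0 < (facetMatrix u e).det.natAbs := by
    have hprod_pos : 0 < ∏ k, A (e.succAbove k) := prod_pos fun k _ ↦ h.pos _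
    rw [← hprod] at hprod_pos
    exact_mod_cast pos_of_mul_pos_left hprod_pos h.normVol_pos.le
  rw [← hprod]
  have hle := Nat.le_of_dvd hdet_pos (Int.natCast_dvd.1 (h.dvd_det_facetMatrix he))
  have := h.normVol_pos
  gcongr

lemma natAbs_det_facetMatrix_eq
    (h : IsDualPair g (fun i ↦ toQ (v i)) (fun i ↦ toQ (u i)) A) {e : Fin (d + 1)}
    (he : g * normVol (fun i ↦ toQ (v i)) = ∏ k, A (e.succAbove k)) :
    (facetMatrix u e).det.natAbs = g := by
  rw [← h.natAbs_det_facetMatrix_mul_normVol] at he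
  exact_mod_cast (mul_right_cancel₀ h.normVol_pos.ne' he).symm

end IsDualPair

lemma IsFanoSimplex.exists_isDualPair (hv : IsFanoSimplex v) (hg : 0 < g)
    (hgor : gorensteinIndex (fun i ↦ toQ (v i)) = g) :
    ∃ (u : Fin (d + 1) → Fin d → ℤ) (A : Fin (d + 1) → ℕ),
      IsDualPair g (fun i ↦ toQ (v i)) (fun i ↦ toQ (u i)) fun i ↦ (A i : ℚ) := by
  have hlattice : IsLatticeSet ((g : ℚ) • dualBody (simplexHull fun i ↦ toQ (v i))) := by
    rw [gorensteinIndex] at hgor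
    exact (hgor ▸ Nat.sInf_mem (Nat.nonempty_of_pos_sInf (hgor ▸ hg))).2
  obtain ⟨uQ, B, h⟩ := _root_.exists_isDualPair hv.1 hv.2.2 (g := (g : ℚ)) (mod_cast hg)
  choose u hu using h.isLatticeSet_iff.1 hlattice
  obtain rfl : (fun i ↦ toQ (u i)) = uQ := funext hu
  have hB (i : Fin (d + 1)) : B i = (u i ⬝ᵥ v i + g : ℤ) := by
    have hii := h.dotProduct_eq i i
    rw [if_pos rfl, toQ_dotProduct_toQ] at hii
    push_cast
    linarith
  have hBnat (i : Fin (d + 1)) : B i = (u i ⬝ᵥ v i + g).toNat := by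
    have hnonneg : 0 ≤ u i ⬝ᵥ v i + g := by exact_mod_cast hB i ▸ (h.pos i).le
    rw [hB, ← Int.cast_natCast (R := ℚ), Int.toNat_of_nonneg hnonneg]
  exact ⟨u, fun i ↦ (u i ⬝ᵥ v i + g).toNat, funext hBnat ▸ h⟩

theorem IsFanoSimplex.exists_perm_monotone_isDualPair (hv : IsFanoSimplex v) (hg : 0 < g)
    (hgor : gorensteinIndex (fun i ↦ toQ (v i)) = g) :
    ∃ (σ : Equiv.Perm (Fin (d + 1))) (u : Fin (d + 1) → Fin d → ℤ) (A : Fin (d + 1) → ℕ),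
      Monotone A ∧
        IsDualPair g (fun i ↦ toQ (v (σ i))) (fun i ↦ toQ (u i)) fun i ↦ (A i : ℚ) := by
  obtain ⟨u, A, h⟩ := hv.exists_isDualPair hg hgor
  exact ⟨Tuple.sort A, u ∘ Tuple.sort A, A ∘ Tuple.sort A, Tuple.monotone_sort A,
    h.comp_perm (Tuple.sort A)⟩

end LatticeDualPair

section Isomorphism

open Matrix

variable {d : ℕ} {g : ℚ} {v u : Fin (d + 1) → Fin d → ℤ} {P : Fin (d + 1) → Fin d → ℚ}

lemma IsIsomorphicToQ.of_comp_perm {σ : Equiv.Perm (Fin (d + 1))}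
    (h : IsIsomorphicToQ (fun i ↦ v (σ i)) P) : IsIsomorphicToQ v P := by
  obtain ⟨U, τ, hU, hUv⟩ := h
  exact ⟨U, τ * σ⁻¹, hU, fun i ↦ by simpa using hUv (σ⁻¹ i)⟩

lemma IsIsomorphicToQ.normVol_eq (h : IsIsomorphicToQ v P) :
    normVol (fun i ↦ toQ (v i)) = normVol P := by
  obtain ⟨U, σ, hU, hUv⟩ := h
  have hdet : |(U.map (Int.cast : ℤ → ℚ)).det| = 1 := by
    rw [det_map_intCast, ← Int.cast_abs, Int.isUnit_iff_abs_eq.1 hU, Int.cast_one]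
  rw [← normVol_comp_perm P σ, ← one_mul (normVol _), ← hdet, ← normVol_mulVec]
  exact congrArg normVol (funext hUv)

/-- Two dual pairs with the same weights and volume have the same facet equations up to a change
of coordinates. Clearing the common factors `c` from the equations makes that change unimodular. -/
theorem IsDualPair.isIsomorphicToQ {u' : Fin (d + 1) → Fin d → ℤ} {A : Fin (d + 1) → ℚ}
    (h : IsDualPair g (fun i ↦ toQ (v i)) (fun i ↦ toQ (u i)) A)
    (h' : IsDualPair g P (fun i ↦ toQ (u' i)) A)
    (hvol : normVol (fun i ↦ toQ (v i)) = normVol P) {e : Fin (d + 1)} {c : Fin d → ℤ}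
    {W W' : Matrix (Fin d) (Fin d) ℤ} (hW : facetMatrix u e = diagonal c * W)
    (hW' : facetMatrix u' e = diagonal c * W') (hW_unit : IsUnit W.det) :
    IsIsomorphicToQ v P := by
  have hprod := h.abs_det_facetMatrix_dual_mul_normVol e
  have hprod' := h'.abs_det_facetMatrix_dual_mul_normVol e
  have hc : (diagonal c).det ≠ 0 := by
    rintro hc
    rw [facetMatrix_toQ, det_map_intCast, hW, det_mul, hc] at hprod
    exact (prod_pos fun k _ ↦ h.pos (e.succAbove k)).ne (by simpa using hprod)
  have habs : |W.det| = |W'.det| := by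
    have hfacet := mul_right_cancel₀ h'.normVol_pos.ne' (hvol ▸ hprod.trans hprod'.symm)
    simp only [facetMatrix_toQ, det_map_intCast, hW, hW', det_mul, Int.cast_mul, abs_mul] at hfacet
    exact_mod_cast mul_left_cancel₀ (abs_ne_zero.2 (Int.cast_ne_zero.2 hc)) hfacet
  have hW'_unit : IsUnit W'.det := by
    rwa [Int.isUnit_iff_abs_eq, ← habs, ← Int.isUnit_iff_abs_eq]
  have hW_mulVec (j : Fin (d + 1)) :
      W.map (Int.cast : ℤ → ℚ) *ᵥ toQ (v j) = W'.map (Int.cast : ℤ → ℚ) *ᵥ P j := by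
    have hdot : facetMatrix (fun i ↦ toQ (u i)) e *ᵥ toQ (v j) =
        facetMatrix (fun i ↦ toQ (u' i)) e *ᵥ P j :=
      funext fun k ↦ (h.dotProduct_eq (e.succAbove k) j).trans (h'.dotProduct_eq _ j).symm
    simp only [facetMatrix_toQ, hW, hW', map_intCast_mul, ← mulVec_mulVec,
      diagonal_map Int.cast_zero] at hdot
    ext k
    have hck : (c k : ℚ) ≠ 0 := by
      rw [det_diagonal] at hc
      exact_mod_cast prod_ne_zero_iff.1 hc k (mem_univ k)
    have hk := congrFun hdot k
    simp only [mulVec_diagonal] at hk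
    exact mul_left_cancel₀ hck hk
  have hinv : W'⁻¹.map (Int.cast : ℤ → ℚ) * W'.map (Int.cast : ℤ → ℚ) = 1 := by
    rw [← map_intCast_mul, nonsing_inv_mul W' hW'_unit,
      Matrix.map_one Int.cast Int.cast_zero Int.cast_one]
  refine ⟨W'⁻¹ * W, 1, ?_, fun j ↦ ?_⟩
  · rw [det_mul]
    exact (isUnit_nonsing_inv_det W' hW'_unit).mul hW_unit
  · rw [map_intCast_mul, ← mulVec_mulVec, hW_mulVec, mulVec_mulVec, hinv, one_mulVec,
      Equiv.Perm.one_apply]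

end Isomorphism

section GeneralExtremalSimplex

open Matrix

variable {N : ℕ} {g : ℕ}

/-- The vertices of `g` times the dual of `Δ(Pgen g (N + 1))`. -/
def extremalDual (g N : ℕ) (i : Fin (N + 2)) : Fin (N + 1) → ℤ :=
  Fin.snoc (α := fun _ ↦ ℤ)
    (fun j : Fin N ↦ (if i = j.castSucc.castSucc then (sylvPartition g N i : ℤ) else 0) - g)
    (g * N + if i = (Fin.last N).castSucc then (g : ℤ) else
      if i = Fin.last (N + 1) then -(g : ℤ) else -sylvPartition g N i)

lemma Pgen_castSucc_castSucc (g : ℕ) (k : Fin N) :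
    Pgen g (N + 1) k.castSucc.castSucc = Pi.single k.castSucc 1 := by
  funext j
  simp [Pgen, Pi.single_apply, Fin.ext_iff]

lemma Pgen_castSucc_last (hg : 0 < g) (N : ℕ) :
    Pgen g (N + 1) (Fin.last N).castSucc = Fin.snoc (α := fun _ ↦ ℚ)
      (fun j : Fin N ↦ tsylv g (N + 1) / g - tsylv g (N + 1) / sylv g (j + 1))
      (tsylv g (N + 1) / g) := by
  have hg0 : (g : ℚ) ≠ 0 := mod_cast hg.ne'
  funext j
  cases j using Fin.lastCases with
  | last => simp [Pgen]
  | cast k =>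
    have hs : (sylv g (k + 1) : ℚ) ≠ 0 := mod_cast (sylv_pos g k).ne'
    have hk : Pgen g (N + 1) (Fin.last N).castSucc k.castSucc =
        (sylv g (k + 1) - g) / sylv g (k + 1) * (tsylv g (N + 1) / g) := by simp [Pgen]
    rw [hk, Fin.snoc_castSucc]
    field_simp

lemma Pgen_last (hg : 0 < g) (N : ℕ) :
    Pgen g (N + 1) (Fin.last (N + 1)) = Fin.snoc (α := fun _ ↦ ℚ)
      (fun j : Fin N ↦ -(tsylv g (N + 1) / g) - tsylv g (N + 1) / sylv g (j + 1))
      (-(tsylv g (N + 1) / g)) := by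
  have hg0 : (g : ℚ) ≠ 0 := mod_cast hg.ne'
  funext j
  cases j using Fin.lastCases with
  | last => simp [Pgen]
  | cast k =>
    have hs : (sylv g (k + 1) : ℚ) ≠ 0 := mod_cast (sylv_pos g k).ne'
    have hk : Pgen g (N + 1) (Fin.last (N + 1)) k.castSucc =
        -((sylv g (k + 1) + g) / sylv g (k + 1) * (tsylv g (N + 1) / g)) := by simp [Pgen]
    rw [hk, Fin.snoc_castSucc]
    field_simp
    ring

lemma toQ_extremalDual_dotProduct_snoc (hg : 0 < g) (i : Fin (N + 2)) (x : ℚ) :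
    toQ (extremalDual g N i) ⬝ᵥ Fin.snoc (α := fun _ ↦ ℚ)
      (fun j : Fin N ↦ x - tsylv g (N + 1) / sylv g (j + 1)) x =
    (if i = (Fin.last N).castSucc then tsylv g (N + 1) + g * x else
      if i = Fin.last (N + 1) then tsylv g (N + 1) - g * x else 0) - g := by
  have hg0 : (g : ℚ) ≠ 0 := mod_cast hg.ne'
  have ht : (tsylv g (N + 1) : ℚ) ≠ 0 := mod_cast (tsylv_pos hg N).ne'
  have hsum : ∑ k : Fin N, (x - tsylv g (N + 1) / sylv g (k + 1)) =
      N * x - (tsylv g (N + 1) / g - 1) := by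
    simp only [sum_sub_distrib, div_eq_mul_inv, ← mul_sum, sum_const, card_fin, nsmul_eq_mul]
    rw [Fin.sum_univ_eq_sum_range fun k ↦ (sylv g (k + 1) : ℚ)⁻¹, sum_inv_sylv hg]
    field_simp
  rw [dotProduct, Fin.sum_univ_castSucc]
  simp only [toQ, extremalDual, Fin.snoc_castSucc, Fin.snoc_last]
  push_cast
  simp only [sub_mul, sum_sub_distrib, ← mul_sum, hsum, ite_mul, zero_mul]
  cases i using Fin.lastCases with
  | last =>
    simp only [(Fin.castSucc_lt_last _).ne', ↓reduceIte, sum_const_zero, zero_sub]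
    field_simp
    ring
  | cast i =>
    cases i using Fin.lastCases with
    | last =>
      simp only [Fin.castSucc_inj, (Fin.castSucc_lt_last _).ne', ↓reduceIte, sum_const_zero,
        zero_sub]
      field_simp
      ring
    | cast k =>
      have hs : (sylv g (k + 1) : ℚ) ≠ 0 := mod_cast (sylv_pos g k).ne'
      simp only [Fin.castSucc_inj, sylvPartition_castSucc_castSucc, sum_ite_eq, mem_univ,
        ↓reduceIte, Fin.castSucc_ne_last, zero_sub]
      field_simp
      ring

theorem isDualPair_Pgen (hg : 0 < g) (N : ℕ) :
    IsDualPair g (Pgen g (N + 1)) (fun i ↦ toQ (extremalDual g N i))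
      fun i ↦ (sylvPartition g N i : ℚ) where
  pos i := Nat.cast_pos.2 (sylvPartition_pos hg i)
  dotProduct_eq i j := by
    have hg0 : (g : ℚ) ≠ 0 := mod_cast hg.ne'
    cases j using Fin.lastCases with
    | last =>
      rw [Pgen_last hg, toQ_extremalDual_dotProduct_snoc hg, mul_neg, mul_div_cancel₀ _ hg0]
      cases i using Fin.lastCases with
      | last => simp [sylvPartition_last, (Fin.castSucc_lt_last _).ne', two_mul]
      | cast i => simp [(Fin.castSucc_lt_last _).ne]
    | cast j =>
      cases j using Fin.lastCases with
      | last =>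
        rw [Pgen_castSucc_last hg, toQ_extremalDual_dotProduct_snoc hg, mul_div_cancel₀ _ hg0,
          sub_self, ite_self]
        split_ifs with hi
        · rw [hi, sylvPartition_castSucc_last]
          push_cast
          ring
        · rfl
      | cast k =>
        rw [Pgen_castSucc_castSucc, dotProduct_single_one, toQ, extremalDual, Fin.snoc_castSucc]
        push_cast
        rfl

lemma det_facetMatrix_Pgen_last (hg : 0 < g) (N : ℕ) :
    (facetMatrix (Pgen g (N + 1)) (Fin.last (N + 1))).det = tsylv g (N + 1) / g := by
  have hrow (k : Fin N) (j : Fin (N + 1)) :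
      facetMatrix (Pgen g (N + 1)) (Fin.last (N + 1)) k.castSucc j =
        if j = k.castSucc then 1 else 0 := by
    simp [facetMatrix, Pgen_castSucc_castSucc, Pi.single_apply]
  rw [det_of_isLowerTriangular, Fin.prod_univ_castSucc]
  · simp only [hrow, if_true, prod_const_one, one_mul]
    simp [facetMatrix, Pgen_castSucc_last hg]
  · intro i j hij
    replace hij : i < j := hij
    obtain ⟨k, rfl⟩ := Fin.exists_castSucc_eq.2 (hij.trans_le (Fin.le_last j)).ne
    exact (hrow k j).trans (if_neg (ne_of_gt hij))

theorem normVol_Pgen (hg : 0 < g) (N : ℕ) :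
    normVol (Pgen g (N + 1)) = 2 * (tsylv g (N + 1) : ℚ) ^ 2 / (g : ℚ) ^ 2 := by
  have hg0 : (0 : ℚ) < g := mod_cast hg
  have ht : (0 : ℚ) < tsylv g (N + 1) := mod_cast tsylv_pos hg N
  have hdet := (isDualPair_Pgen hg N).symm.abs_det_facetMatrix_dual (Fin.last (N + 1))
  rw [det_facetMatrix_Pgen_last hg, abs_of_pos (div_pos ht hg0), sylvPartition_last] at hdet
  push_cast at hdet
  field_simp at hdet ⊢
  linarith

end GeneralExtremalSimplex

section GeneralEqualityCase

open Matrix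

variable {N : ℕ} {g : ℕ}

lemma apply_last_eq_zero_of_det_eq_zero {R : Type*} [CommRing R]
    {U : Matrix (Fin (N + 1)) (Fin (N + 1)) R} (hU : U.det = 0) {x : Fin N → Fin (N + 1) → R}
    (hx : ∀ i k, U i ⬝ᵥ x k = if i = k.castSucc then 1 else 0) (m : Fin (N + 1)) :
    U (Fin.last N) m = 0 := by
  let X : Matrix (Fin (N + 1)) (Fin (N + 1)) R :=
    of (Fin.snoc (α := fun _ ↦ Fin (N + 1) → R) x (Pi.single m 1))
  have hUX_castSucc (i : Fin (N + 1)) (k : Fin N) :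
      (U * Xᵀ) i k.castSucc = if i = k.castSucc then 1 else 0 := by
    rw [← hx, mul_apply]
    simp [X, dotProduct]
  have hUX_last : (U * Xᵀ) (Fin.last N) (Fin.last N) = U (Fin.last N) m := by
    simp [X, mul_apply, Pi.single_apply]
  have hdet : (U * Xᵀ).det = U (Fin.last N) m := by
    rw [det_of_isUpperTriangular, Fin.prod_univ_castSucc, hUX_last]
    · simp [hUX_castSucc]
    · intro i j hji
      obtain ⟨k, rfl⟩ := Fin.exists_castSucc_eq.2 (hji.trans_le (Fin.le_last i)).ne
      exact (hUX_castSucc i k).trans (if_neg (ne_of_gt hji))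
  rw [← hdet, det_mul, hU, zero_mul]

lemma IsDualPair.dvd_castSucc_last {v u : Fin (N + 2) → Fin (N + 1) → ℤ}
    (h : IsDualPair g (fun i ↦ toQ (v i)) (fun i ↦ toQ (u i)) fun i ↦ (sylvPartition g N i : ℚ))
    (hdet : (facetMatrix u (Fin.last (N + 1))).det.natAbs = g) (m : Fin (N + 1)) :
    (g : ℤ) ∣ u (Fin.last N).castSucc m := by
  let φ := Int.castRingHom (ZMod g)
  have hU : (φ.mapMatrix (facetMatrix u (Fin.last (N + 1)))).det = 0 := by
    rw [← φ.map_det]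
    exact (ZMod.intCast_zmod_eq_zero_iff_dvd _ g).2 (Int.natCast_dvd.2 hdet.symm.dvd)
  have hx (i : Fin (N + 1)) (k : Fin N) :
      φ.mapMatrix (facetMatrix u (Fin.last (N + 1))) i ⬝ᵥ (φ ∘ v k.castSucc.castSucc) =
        if i = k.castSucc then 1 else 0 := by
    have hdot : u i.castSucc ⬝ᵥ v k.castSucc.castSucc =
        (if i = k.castSucc then (sylv g (k + 1) : ℤ) else 0) - g := by
      have hdot := h.dotProduct_eq i.castSucc k.castSucc.castSucc
      simp only [toQ_dotProduct_toQ, Fin.castSucc_inj] at hdot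
      split_ifs at hdot ⊢ with hik
      · obtain rfl := hik
        rw [sylvPartition_castSucc_castSucc] at hdot
        exact_mod_cast hdot
      · exact_mod_cast hdot
    have hφ := congrArg φ hdot
    rw [φ.map_dotProduct] at hφ
    have hrow : φ.mapMatrix (facetMatrix u (Fin.last (N + 1))) i = φ ∘ u i.castSucc := by
      rw [← Fin.succAbove_last_apply]
      rfl
    rw [hrow, hφ]
    split_ifs <;> simp [natCast_zmod_sylv]
  have hzero := apply_last_eq_zero_of_det_eq_zero hU hx m
  rw [← ZMod.intCast_zmod_eq_zero_iff_dvd]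
  simpa [facetMatrix, φ] using hzero

lemma exists_facetMatrix_last_eq_diagonal_mul {u : Fin (N + 2) → Fin (N + 1) → ℤ}
    (hu : ∀ m, (g : ℤ) ∣ u (Fin.last N).castSucc m) :
    ∃ W : Matrix (Fin (N + 1)) (Fin (N + 1)) ℤ,
      facetMatrix u (Fin.last (N + 1)) = diagonal (Fin.snoc (α := fun _ ↦ ℤ) 1 g) * W := by
  choose y hy using hu
  refine ⟨of (Fin.snoc (α := fun _ ↦ Fin (N + 1) → ℤ) (fun k ↦ u k.castSucc.castSucc) y), ?_⟩
  ext i m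
  cases i using Fin.lastCases <;> simp [facetMatrix, diagonal_mul, hy]

lemma dvd_extremalDual_castSucc_last (g : ℕ) (m : Fin (N + 1)) :
    (g : ℤ) ∣ extremalDual g N (Fin.last N).castSucc m := by
  cases m using Fin.lastCases with
  | last => exact ⟨N + 1, by simp [extremalDual, mul_add]⟩
  | cast k => exact ⟨-1, by simp [extremalDual, (Fin.castSucc_lt_last k).ne']⟩

theorem IsDualPair.isIsomorphicToQ_Pgen {v u : Fin (N + 2) → Fin (N + 1) → ℤ}
    (h : IsDualPair g (fun i ↦ toQ (v i)) (fun i ↦ toQ (u i)) fun i ↦ (sylvPartition g N i : ℚ))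
    (hvol : normVol (fun i ↦ toQ (v i)) = 2 * (tsylv g (N + 1) : ℚ) ^ 2 / (g : ℚ) ^ 2)
    (hdet : (facetMatrix u (Fin.last (N + 1))).det.natAbs = g) :
    IsIsomorphicToQ v (Pgen g (N + 1)) := by
  have hg : 0 < g := Nat.cast_pos.1 h.index_pos
  obtain ⟨W, hW⟩ := exists_facetMatrix_last_eq_diagonal_mul (h.dvd_castSucc_last hdet)
  obtain ⟨W', hW'⟩ := exists_facetMatrix_last_eq_diagonal_mul
    (dvd_extremalDual_castSucc_last (N := N) g)
  refine h.isIsomorphicToQ (isDualPair_Pgen hg N) (hvol.trans (normVol_Pgen hg N).symm) hW hW' ?_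
  rw [hW, det_mul, det_diagonal, Fin.prod_univ_castSucc, Int.natAbs_mul] at hdet
  simp only [Fin.snoc_castSucc, Fin.snoc_last, Pi.one_apply, prod_const_one, one_mul,
    Int.natAbs_natCast] at hdet
  exact Int.isUnit_iff_natAbs_eq.2 ((mul_eq_left₀ hg.ne').1 hdet)

end GeneralEqualityCase

section ExceptionalSimplices

open Matrix

lemma toQ_vecMul {d : ℕ} (x : Fin d → ℤ) (U : Matrix (Fin d) (Fin d) ℤ) :
    toQ (x ᵥ* U) = toQ x ᵥ* U.map Int.cast :=
  funext ((Int.castRingHom ℚ).map_vecMul U x)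

lemma IsDualPair.gorensteinIndex_le {d g : ℕ} {v : Fin (d + 1) → Fin d → ℚ}
    {u : Fin (d + 1) → Fin d → ℤ} {A : Fin (d + 1) → ℚ}
    (h : IsDualPair g v (fun i ↦ toQ (u i)) A) : gorensteinIndex v ≤ g :=
  Nat.sInf_le ⟨Nat.cast_pos.1 h.index_pos, h.isLatticeSet_iff.2 fun i ↦ ⟨u i, rfl⟩⟩

lemma IsIsomorphicToQ.gorensteinIndex_le {d g : ℕ} {v u : Fin (d + 1) → Fin d → ℤ}
    {P : Fin (d + 1) → Fin d → ℚ} {A : Fin (d + 1) → ℚ} (hiso : IsIsomorphicToQ v P)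
    (h : IsDualPair g P (fun i ↦ toQ (u i)) A) : gorensteinIndex (fun i ↦ toQ (v i)) ≤ g := by
  obtain ⟨U, σ, -, hUv⟩ := hiso
  have hdual : IsDualPair g (fun i ↦ toQ (v i)) (fun i ↦ toQ (u (σ i) ᵥ* U)) (A ∘ σ) := by
    refine ⟨fun i ↦ h.pos (σ i), fun i j ↦ ?_⟩
    rw [toQ_vecMul, ← dotProduct_mulVec, hUv, h.dotProduct_eq]
    simp [σ.injective.eq_iff]
  exact hdual.gorensteinIndex_le

/-- The vertices of the dual of `Δ(Pexc 3)`. -/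
def exceptionalDual : Fin 4 → Fin 3 → ℤ := ![![1, -1, 0], ![-1, 3, -1], ![-1, 0, 1], ![-1, 0, 0]]

lemma isDualPair_Pexc : IsDualPair (1 : ℕ) (Pexc 3) (fun i ↦ toQ (exceptionalDual i))
    fun i ↦ ((if i = 0 then 2 else 6 : ℕ) : ℚ) where
  pos i := by split_ifs <;> norm_num
  dotProduct_eq i j := by
    fin_cases i <;> fin_cases j <;>
      simp [exceptionalDual, toQ, Pexc, dotProduct, Fin.sum_univ_three] <;> norm_num

lemma det_facetMatrix_exceptionalDual : (facetMatrix exceptionalDual (Fin.last 3)).det = 1 := by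
  decide

lemma normVol_Pexc : normVol (Pexc 3) = 72 := by
  have h := isDualPair_Pexc.abs_det_facetMatrix_dual_mul_normVol (Fin.last 3)
  rw [facetMatrix_toQ, det_map_intCast, det_facetMatrix_exceptionalDual] at h
  norm_num [Fin.prod_univ_three, Fin.succAbove_last] at h
  exact h

theorem IsDualPair.isIsomorphicToQ_Pexc {v u : Fin 4 → Fin 3 → ℤ}
    (h : IsDualPair (1 : ℕ) (fun i ↦ toQ (v i)) (fun i ↦ toQ (u i))
      fun i ↦ ((if i = 0 then 2 else 6 : ℕ) : ℚ))
    (hvol : normVol (fun i ↦ toQ (v i)) = 72)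
    (hdet : (facetMatrix u (Fin.last 3)).det.natAbs = 1) : IsIsomorphicToQ v (Pexc 3) :=
  h.isIsomorphicToQ isDualPair_Pexc (hvol.trans normVol_Pexc.symm) (e := Fin.last 3)
    (c := fun _ ↦ 1) (by rw [diagonal_one, one_mul]) (by rw [diagonal_one, one_mul])
    (Int.isUnit_iff_natAbs_eq.2 hdet)

lemma IsPrimitive.not_forall_even {d : ℕ} {x : Fin d → ℤ} (hx : IsPrimitive x) :
    ¬∀ i, Even (x i) := by
  intro heven
  have htwo : (2 : ℤ) ∣ univ.gcd x := dvd_gcd fun i _ ↦ (heven i).two_dvd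
  rw [show univ.gcd x = 1 from hx] at htwo
  norm_num at htwo

/-- Modulo `2` the vectors are the three nonzero elements of `𝔽₂²`. -/
lemma not_even_det_facetMatrix_of_sum_eq_zero {v : Fin 3 → Fin 2 → ℤ}
    (hprim : ∀ i, IsPrimitive (v i)) (hsum : ∑ i, v i = 0) :
    ¬Even (facetMatrix v (Fin.last 2)).det := by
  have heven (j : Fin 2) : Even (v 2 j) ↔ (Even (v 0 j) ↔ Even (v 1 j)) := by
    have hj : v 0 j + v 1 j + v 2 j = 0 := by simpa [Fin.sum_univ_three] using congrFun hsum j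
    rw [eq_neg_of_add_eq_zero_right hj, even_neg, Int.even_add]
  have hprim' (i : Fin 3) : ¬(Even (v i 0) ∧ Even (v i 1)) := by
    simpa [Fin.forall_fin_two] using (hprim i).not_forall_even
  have h0 := hprim' 0
  have h1 := hprim' 1
  have h2 := hprim' 2
  rw [heven, heven] at h2
  have hdet : (facetMatrix v (Fin.last 2)).det = v 0 0 * v 1 1 - v 0 1 * v 1 0 := by
    rw [det_fin_two]
    rfl
  rw [hdet, Int.even_sub, Int.even_mul, Int.even_mul]
  tauto

lemma IsDualPair.natAbs_det_facetMatrix_ne_two {v u : Fin 3 → Fin 2 → ℤ}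
    (h : IsDualPair (2 : ℕ) (fun i ↦ toQ (v i)) (fun i ↦ toQ (u i)) fun _ ↦ ((6 : ℕ) : ℚ))
    (hprim : ∀ i, IsPrimitive (v i)) : (facetMatrix u (Fin.last 2)).det.natAbs ≠ 2 := by
  intro hdet
  have hsum : ∑ i, v i = 0 := by
    have hQ := h.symm.sum_inv_smul_dual
    rw [← smul_sum, smul_eq_zero_iff_right (by norm_num)] at hQ
    funext j
    have hj := congrFun hQ j
    simp only [Finset.sum_apply, toQ, Pi.zero_apply] at hj ⊢
    exact_mod_cast hj
  have hvol : normVol (fun i ↦ toQ (v i)) = 18 := by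
    have hprod := h.natAbs_det_facetMatrix_mul_normVol (Fin.last 2)
    rw [hdet, prod_const, card_univ, Fintype.card_fin] at hprod
    norm_num at hprod
    linarith
  have habs := h.symm.abs_det_facetMatrix_dual (Fin.last 2)
  rw [hvol, facetMatrix_toQ, det_map_intCast] at habs
  have habs' : |(facetMatrix v (Fin.last 2)).det| = 6 := by
    norm_num at habs
    exact_mod_cast habs
  refine not_even_det_facetMatrix_of_sum_eq_zero hprim hsum ?_
  rw [← even_abs, habs']
  decide

end ExceptionalSimplices

section Bound

variable {N g : ℕ} {v u : Fin (N + 2) → Fin (N + 1) → ℤ} {A : Fin (N + 2) → ℕ}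

lemma IsDualPair.mul_normVol_le_prod_castSucc
    (h : IsDualPair g (fun i ↦ toQ (v i)) (fun i ↦ toQ (u i)) fun i ↦ (A i : ℚ))
    (hprim : IsPrimitive (v (Fin.last (N + 1)))) :
    g * normVol (fun i ↦ toQ (v i)) ≤ (∏ k : Fin (N + 1), A k.castSucc : ℕ) := by
  simpa only [Fin.succAbove_last, Nat.cast_prod] using h.mul_normVol_le_prod_succAbove hprim

theorem IsDualPair.normVol_le
    (h : IsDualPair g (fun i ↦ toQ (v i)) (fun i ↦ toQ (u i)) fun i ↦ (A i : ℚ))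
    (hA : Monotone A) (hNg : 2 ≤ N * g) (hprim : IsPrimitive (v (Fin.last (N + 1)))) :
    normVol (fun i ↦ toQ (v i)) ≤ 2 * (tsylv g (N + 1) : ℚ) ^ 2 / (g : ℚ) ^ 2 := by
  have hg : (0 : ℚ) < g := h.index_pos
  rw [le_div_iff₀' (by positivity)]
  calc (g : ℚ) ^ 2 * normVol (fun i ↦ toQ (v i))
      = g * (g * normVol (fun i ↦ toQ (v i))) := by ring
    _ ≤ g * (∏ k : Fin (N + 1), A k.castSucc : ℕ) := by
        gcongr
        exact h.mul_normVol_le_prod_castSucc hprim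
    _ ≤ 2 * (tsylv g (N + 1) : ℚ) ^ 2 :=
        mod_cast h.isUnitFractionPartition.mul_prod_castSucc_le hA hNg

lemma IsDualPair.mul_prod_castSucc_eq
    (h : IsDualPair g (fun i ↦ toQ (v i)) (fun i ↦ toQ (u i)) fun i ↦ (A i : ℚ))
    (hA : Monotone A) (hNg : 2 ≤ N * g) (hprim : IsPrimitive (v (Fin.last (N + 1))))
    (hvol : normVol (fun i ↦ toQ (v i)) = 2 * (tsylv g (N + 1) : ℚ) ^ 2 / (g : ℚ) ^ 2) :
    g * ∏ k : Fin (N + 1), A k.castSucc = 2 * tsylv g (N + 1) ^ 2 := by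
  have hg : (0 : ℚ) < g := h.index_pos
  refine (h.isUnitFractionPartition.mul_prod_castSucc_le hA hNg).antisymm ?_
  have hle := mul_le_mul_of_nonneg_left (h.mul_normVol_le_prod_castSucc hprim) hg.le
  rw [hvol] at hle
  field_simp at hle
  exact_mod_cast hle

lemma IsDualPair.natAbs_det_facetMatrix_last_eq
    (h : IsDualPair g (fun i ↦ toQ (v i)) (fun i ↦ toQ (u i)) fun i ↦ (A i : ℚ))
    (hvol : normVol (fun i ↦ toQ (v i)) = 2 * (tsylv g (N + 1) : ℚ) ^ 2 / (g : ℚ) ^ 2)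
    (hprod : g * ∏ k : Fin (N + 1), A k.castSucc = 2 * tsylv g (N + 1) ^ 2) :
    (facetMatrix u (Fin.last (N + 1))).det.natAbs = g := by
  have hg : (0 : ℚ) < g := h.index_pos
  refine h.natAbs_det_facetMatrix_eq ?_
  have hprodQ : (g : ℚ) * ∏ k : Fin (N + 1), (A k.castSucc : ℚ) = 2 * (tsylv g (N + 1) : ℚ) ^ 2 :=
    mod_cast hprod
  simp only [Fin.succAbove_last]
  rw [hvol, ← hprodQ]
  field_simp

theorem IsDualPair.isIsomorphicToQ_of_normVol_eq
    (h : IsDualPair g (fun i ↦ toQ (v i)) (fun i ↦ toQ (u i)) fun i ↦ (A i : ℚ))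
    (hA : Monotone A) (hNg : 2 ≤ N * g) (hprim : ∀ i, IsPrimitive (v i))
    (hvol : normVol (fun i ↦ toQ (v i)) = 2 * (tsylv g (N + 1) : ℚ) ^ 2 / (g : ℚ) ^ 2) :
    (N + 1 = 3 ∧ IsIsomorphicToQ v (Pexc (N + 1))) ∨ IsIsomorphicToQ v (Pgen g (N + 1)) := by
  have hprod := h.mul_prod_castSucc_eq hA hNg (hprim _) hvol
  have hdet := h.natAbs_det_facetMatrix_last_eq hvol hprod
  rcases h.isUnitFractionPartition.eq_of_mul_prod_castSucc_eq hA hNg hprod with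
    rfl | ⟨rfl, rfl, hA6⟩ | ⟨rfl, rfl, hA26⟩
  · exact .inr (h.isIsomorphicToQ_Pgen hvol hdet)
  · obtain rfl : A = fun _ ↦ 6 := funext hA6
    exact absurd hdet (h.natAbs_det_facetMatrix_ne_two hprim)
  · obtain rfl : A = fun i ↦ if i = 0 then 2 else 6 := funext hA26
    refine .inl ⟨rfl, h.isIsomorphicToQ_Pexc (hvol.trans ?_) hdet⟩
    norm_num [tsylv, sylv]

end Bound

/-- For a Fano simplex of dimension `d ≥ 2` and Gorenstein index
`g ≥ 1` with `(d,g) ≠ (2,1)` one has `Vol(Δ) ≤ 2 t_{g,d}² / g²`, with equality iff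
`Δ` is isomorphic to `Δ(P)` for one of the two listed extremal matrices. -/
theorem volume_bound_general
    (d g : ℕ) (hd : 2 ≤ d) (hg : 1 ≤ g) (hdg : ¬(d = 2 ∧ g = 1))
    (v : Fin (d + 1) → Fin d → ℤ)
    (hFano : IsFanoSimplex v)
    (hGor : gorensteinIndex (fun i => toQ (v i)) = g) :
    normVol (fun i => toQ (v i)) ≤ 2 * (tsylv g d : ℚ) ^ 2 / (g : ℚ) ^ 2 ∧
      (normVol (fun i => toQ (v i)) = 2 * (tsylv g d : ℚ) ^ 2 / (g : ℚ) ^ 2 ↔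
        (d = 3 ∧ IsIsomorphicToQ v (Pexc d)) ∨ IsIsomorphicToQ v (Pgen g d)) := by
  obtain ⟨N, rfl⟩ : ∃ N, d = N + 1 := Nat.exists_eq_add_of_le' (by lia)
  have hNg : 2 ≤ N * g := by
    rcases hg.eq_or_lt with rfl | hg2
    · lia
    · nlinarith
  obtain ⟨σ, u, A, hA, h⟩ := hFano.exists_perm_monotone_isDualPair hg hGor
  have hprim (i : Fin (N + 2)) : IsPrimitive (v (σ i)) := hFano.2.1 (σ i)
  have hvol : normVol (fun i ↦ toQ (v (σ i))) = normVol fun i ↦ toQ (v i) :=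
    normVol_comp_perm (fun i ↦ toQ (v i)) σ
  refine ⟨hvol ▸ h.normVol_le hA hNg (hprim _), fun heq ↦ ?_, ?_⟩
  · exact (h.isIsomorphicToQ_of_normVol_eq hA hNg hprim (hvol.trans heq)).imp
      (fun hexc ↦ ⟨hexc.1, hexc.2.of_comp_perm⟩) fun hgen ↦ hgen.of_comp_perm
  · rintro (⟨hN, hiso⟩ | hiso)
    · obtain rfl : N = 2 := Nat.succ_injective hN
      obtain rfl : g = 1 := (hGor ▸ hiso.gorensteinIndex_le isDualPair_Pexc).antisymm hg
      rw [hiso.normVol_eq, normVol_Pexc]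
      norm_num [tsylv, sylv]
    · rw [hiso.normVol_eq, normVol_Pgen hg]
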